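/- arXiv:1112.3800 — 2 statements merged into one kernel-verified Lean document; each statement's English description precedes it below -/
import Mathlib

section
/- Let n, k be natural numbers. The ring R^k(ℝⁿ) is radically principal: for every ideal I of R^k(ℝⁿ) there exists a k-regulous function f ∈ I such that Z(f) = Z(I) and the radical of the principal ideal (f) equals the radical of I, where Z(I) = ⋂_{g ∈ I} Z(g). -/
open MvPolynomial

/-- A function `f : ℝⁿ → ℝ` is `k`-regulous if it is of class `C^k` on all of `ℝⁿ` and
agrees with a rational function: there are polynomials `p`, `q` with `q ≠ 0` and
`q(x) * f(x) = p(x)` for every `x`. -/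
def IsRegulous (n k : ℕ) (f : (Fin n → ℝ) → ℝ) : Prop :=
  ContDiff ℝ k f ∧ ∃ p q : MvPolynomial (Fin n) ℝ, q ≠ 0 ∧
    ∀ x : Fin n → ℝ, eval x q * f x = eval x p

/-- The ring `R^k(ℝⁿ)` of `k`-regulous functions, as a subring of the ring of all
functions `ℝⁿ → ℝ` with pointwise operations. -/
def regulousRing (n k : ℕ) : Subring ((Fin n → ℝ) → ℝ) where
  carrier := {f | IsRegulous n k f}
  one_mem' := ⟨contDiff_const, 1, 1, one_ne_zero, by simp⟩
  zero_mem' := ⟨contDiff_const, 0, 1, one_ne_zero, by simp⟩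
  mul_mem' := by
    rintro f g ⟨hf, p₁, q₁, hq₁, h₁⟩ ⟨hg, p₂, q₂, hq₂, h₂⟩
    refine ⟨hf.mul hg, p₁ * p₂, q₁ * q₂, mul_ne_zero hq₁ hq₂, fun x => ?_⟩
    simp only [eval_mul, Pi.mul_apply]
    linear_combination (eval x q₂ * g x) * h₁ x + eval x p₁ * h₂ x
  add_mem' := by
    rintro f g ⟨hf, p₁, q₁, hq₁, h₁⟩ ⟨hg, p₂, q₂, hq₂, h₂⟩
    refine ⟨hf.add hg, p₁ * q₂ + p₂ * q₁, q₁ * q₂, mul_ne_zero hq₁ hq₂, fun x => ?_⟩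
    simp only [eval_mul, eval_add, Pi.add_apply]
    linear_combination (eval x q₂) * h₁ x + (eval x q₁) * h₂ x
  neg_mem' := by
    rintro f ⟨hf, p, q, hq, h⟩
    refine ⟨hf.neg, -p, q, hq, fun x => ?_⟩
    simp only [map_neg, Pi.neg_apply]
    linear_combination -(h x)

namespace Reg

/-- An order isomorphism of the line moving `c` to `d`, supported in `(a,b)`; case `c ≤ d`. -/
lemma exists_move_aux {a b c d : ℝ} (hac : a < c) (hcd : c ≤ d) (hdb : d < b) :
    ∃ h : ℝ ≃o ℝ, h c = d ∧ ∀ x, x ∉ Set.Ioo a b → h x = x := by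
  have h1 : 0 < (d - a) / (c - a) := div_pos (by linarith) (by linarith)
  have h2 : 0 < (b - d) / (b - c) := div_pos (by linarith) (by linarith)
  have h1' : 1 ≤ (d - a) / (c - a) := by rw [le_div_iff₀ (by linarith)]; linarith
  have h2' : (b - d) / (b - c) ≤ 1 := by rw [div_le_iff₀ (by linarith)]; linarith
  have e1 : (d - a) / (c - a) * (c - a) = d - a := div_mul_cancel₀ _ (by linarith)
  have e2 : (b - d) / (b - c) * (b - c) = b - d := div_mul_cancel₀ _ (by linarith)
  set s := (d - a) / (c - a) with hs
  set r := (b - d) / (b - c) with hr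
  let f : ℝ → ℝ := fun x => max x (min (a + s * (x - a)) (b - r * (b - x)))
  have hf : StrictMono f := by
    intro x y hxy
    have i1 : a + s * (x - a) < a + s * (y - a) := by nlinarith
    have i2 : b - r * (b - x) < b - r * (b - y) := by nlinarith
    exact max_lt_max hxy (min_lt_min i1 i2)
  have hout : ∀ x, x ∉ Set.Ioo a b → f x = x := by
    intro x hx
    apply max_eq_left
    by_cases hxa : x ≤ a
    · exact (min_le_left _ _).trans (by nlinarith)
    · have : b ≤ x := by
        by_contra hb
        exact hx ⟨by linarith, by linarith⟩
      exact (min_le_right _ _).trans (by nlinarith)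
  have hfc : Continuous f := by fun_prop
  have hsurj : Function.Surjective f := by
    intro y
    have m1 : f (min a y) = min a y := hout _ (by simp)
    have m2 : f (max b y) = max b y := hout _ (by simp)
    have := intermediate_value_Icc (a := min a y) (b := max b y)
      ((min_le_right _ _).trans (le_max_right _ _)) hfc.continuousOn
    obtain ⟨x, _, hx⟩ := this (show y ∈ Set.Icc _ _ by rw [m1, m2]; simp)
    exact ⟨x, hx⟩
  refine ⟨StrictMono.orderIsoOfSurjective f hf hsurj, ?_, ?_⟩
  · show f c = d
    have : b - r * (b - c) = d := by linarith
    simp only [f]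
    rw [e1, this]
    simp [hcd]
  · exact hout

lemma exists_move {a b c d : ℝ} (hac : a < c) (hcb : c < b) (had : a < d) (hdb : d < b) :
    ∃ h : ℝ ≃o ℝ, h c = d ∧ ∀ x, x ∉ Set.Ioo a b → h x = x := by
  rcases le_total c d with hcd | hcd
  · exact exists_move_aux hac hcd hdb
  · obtain ⟨h, h1, h2⟩ := exists_move_aux had hcd hcb
    refine ⟨h.symm, ?_, ?_⟩
    · rw [← h1]; simp
    · intro x hx
      conv_lhs => rw [← h2 x hx]
      simp

/-- Repairing a gap, increasing case. -/
lemma gap_mono {z w : ℝ} (hzw : z < w) {u v : ℝ → ℝ} (hu : Continuous u) (hv : Continuous v)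
    (mu : StrictMonoOn u (Set.Icc z w)) (mv : StrictMonoOn v (Set.Icc z w))
    (hz : SignType.sign (u z) = SignType.sign (v z))
    (hw : SignType.sign (u w) = SignType.sign (v w)) :
    ∃ h : ℝ ≃o ℝ, (∀ x, x ∉ Set.Ioo z w → h x = x) ∧
      ∀ x ∈ Set.Icc z w, SignType.sign (u x) = SignType.sign (v (h x)) := by
  have zm : z ∈ Set.Icc z w := ⟨le_rfl, hzw.le⟩
  have wm : w ∈ Set.Icc z w := ⟨hzw.le, le_rfl⟩
  by_cases h1 : 0 ≤ u z
  · have h1' : 0 ≤ v z := by rw [← sign_nonneg_iff] at h1 ⊢; rwa [← hz]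
    refine ⟨OrderIso.refl ℝ, fun _ _ => rfl, fun x hx => ?_⟩
    rcases hx.1.eq_or_lt with rfl | hlt
    · exact hz
    · have := mu zm hx hlt
      have := mv zm hx hlt
      show _ = SignType.sign (v x)
      rw [sign_pos (by linarith), sign_pos (by linarith)]
  by_cases h2 : u w ≤ 0
  · have h2' : v w ≤ 0 := by rw [← sign_nonpos_iff] at h2 ⊢; rwa [← hw]
    refine ⟨OrderIso.refl ℝ, fun _ _ => rfl, fun x hx => ?_⟩
    rcases hx.2.eq_or_lt with rfl | hlt
    · exact hw
    · have := mu hx wm hlt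
      have := mv hx wm hlt
      show _ = SignType.sign (v x)
      rw [sign_neg (by linarith), sign_neg (by linarith)]
  push Not at h1 h2
  have h1' : v z < 0 := by rw [← sign_eq_neg_one_iff] at h1 ⊢; rwa [← hz]
  have h2' : 0 < v w := by rw [← sign_eq_one_iff] at h2 ⊢; rwa [← hw]
  obtain ⟨r, hr, hr0⟩ := intermediate_value_Ioo hzw.le hu.continuousOn ⟨h1, h2⟩
  obtain ⟨s, hs, hs0⟩ := intermediate_value_Ioo hzw.le hv.continuousOn ⟨h1', h2'⟩
  obtain ⟨h, hh, hout⟩ := exists_move hr.1 hr.2 hs.1 hs.2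
  refine ⟨h, hout, fun x hx => ?_⟩
  have rI : r ∈ Set.Icc z w := ⟨hr.1.le, hr.2.le⟩
  have sI : s ∈ Set.Icc z w := ⟨hs.1.le, hs.2.le⟩
  have hz' : h z = z := hout z (by simp)
  have hw' : h w = w := hout w (by simp)
  have hx' : h x ∈ Set.Icc z w := by
    constructor
    · rw [← hz']; exact h.monotone hx.1
    · rw [← hw']; exact h.monotone hx.2
  rcases lt_trichotomy x r with hlt | rfl | hlt
  · have a1 := mu hx rI hlt
    have a2 : h x < s := by rw [← hh]; exact h.strictMono hlt
    have a3 := mv hx' sI a2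
    rw [sign_neg (by linarith), sign_neg (by linarith)]
  · rw [hh, hr0, hs0]
  · have a1 := mu rI hx hlt
    have a2 : s < h x := by rw [← hh]; exact h.strictMono hlt
    have a3 := mv sI hx' a2
    rw [sign_pos (by linarith), sign_pos (by linarith)]

lemma gap_fix {z w : ℝ} (hzw : z < w) {u v : ℝ → ℝ} (hu : Continuous u) (hv : Continuous v)
    (m : (StrictMonoOn u (Set.Icc z w) ∧ StrictMonoOn v (Set.Icc z w)) ∨
      (StrictAntiOn u (Set.Icc z w) ∧ StrictAntiOn v (Set.Icc z w)))
    (hz : SignType.sign (u z) = SignType.sign (v z))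
    (hw : SignType.sign (u w) = SignType.sign (v w)) :
    ∃ h : ℝ ≃o ℝ, (∀ x, x ∉ Set.Ioo z w → h x = x) ∧
      ∀ x ∈ Set.Icc z w, SignType.sign (u x) = SignType.sign (v (h x)) := by
  rcases m with ⟨mu, mv⟩ | ⟨mu, mv⟩
  · exact gap_mono hzw hu hv mu mv hz hw
  · obtain ⟨h, h1, h2⟩ := gap_mono (u := fun x => - u x) (v := fun x => - v x) hzw hu.neg hv.neg
      (fun x hx y hy hxy => neg_lt_neg (mu hx hy hxy))
      (fun x hx y hy hxy => neg_lt_neg (mv hx hy hxy))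
      (by simp [Left.sign_neg, hz]) (by simp [Left.sign_neg, hw])
    refine ⟨h, h1, fun x hx => ?_⟩
    have := h2 x hx
    simpa [Left.sign_neg] using this

/-- `z, w` are consecutive elements of `Z`. -/
def Consec (Z : Finset ℝ) (z w : ℝ) : Prop :=
  z ∈ Z ∧ w ∈ Z ∧ z < w ∧ ∀ y ∈ Z, y ≤ z ∨ w ≤ y

lemma fix_all (Z : Finset ℝ) {u : ℝ → ℝ} (hu : Continuous u) (S : Finset ℝ) :
    ∀ v : ℝ → ℝ, Continuous v →
    (∀ z ∈ Z, SignType.sign (u z) = SignType.sign (v z)) →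
    (∀ z w, Consec Z z w → (StrictMonoOn u (Set.Icc z w) ∧ StrictMonoOn v (Set.Icc z w)) ∨
      (StrictAntiOn u (Set.Icc z w) ∧ StrictAntiOn v (Set.Icc z w))) →
    (∀ x, SignType.sign (u x) ≠ SignType.sign (v x) →
      ∃ z ∈ S, ∃ w, Consec Z z w ∧ x ∈ Set.Ioo z w) →
    ∃ h : ℝ ≃o ℝ, (∀ z ∈ Z, h z = z) ∧ ∀ x, SignType.sign (u x) = SignType.sign (v (h x)) := by
  induction S using Finset.induction_on with
  | empty =>
    intro v hv hZ hm hbad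
    refine ⟨OrderIso.refl ℝ, fun _ _ => rfl, fun x => ?_⟩
    by_contra hne
    obtain ⟨z, hz, _⟩ := hbad x hne
    simp at hz
  | insert z S hzS ih =>
    intro v hv hZ hm hbad
    by_cases hc : ∃ w, Consec Z z w
    · obtain ⟨w, hc⟩ := hc
      obtain ⟨h0, hout, hin⟩ := gap_fix hc.2.2.1 hu hv (hm z w hc) (hZ z hc.1) (hZ w hc.2.1)
      have hfix : ∀ y ∈ Z, h0 y = y := by
        intro y hy
        apply hout
        rintro ⟨h1, h2⟩
        rcases hc.2.2.2 y hy with h | h <;> linarith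
      have hmap : ∀ a b, Consec Z a b → ∀ x ∈ Set.Icc a b, h0 x ∈ Set.Icc a b := by
        intro a b hab x hx
        constructor
        · rw [← hfix a hab.1]; exact h0.monotone hx.1
        · rw [← hfix b hab.2.1]; exact h0.monotone hx.2
      obtain ⟨h1, h1Z, h1s⟩ := ih (fun x => v (h0 x)) (hv.comp h0.continuous)
        (fun y hy => by rw [hfix y hy]; exact hZ y hy)
        (by
          intro a b hab
          rcases hm a b hab with ⟨m1, m2⟩ | ⟨m1, m2⟩
          · exact Or.inl ⟨m1, fun x hx y hy hxy =>
              m2 (hmap a b hab x hx) (hmap a b hab y hy) (h0.strictMono hxy)⟩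
          · exact Or.inr ⟨m1, fun x hx y hy hxy =>
              m2 (hmap a b hab x hx) (hmap a b hab y hy) (h0.strictMono hxy)⟩)
        (by
          intro x hx
          have hx1 : x ∉ Set.Ioo z w := fun hxx => hx (hin x ⟨hxx.1.le, hxx.2.le⟩)
          rw [hout x hx1] at hx
          obtain ⟨z', hz', w', hc', hxw⟩ := hbad x hx
          rcases Finset.mem_insert.1 hz' with rfl | hz'
          · exfalso
            have e : w' = w := by
              rcases hc.2.2.2 w' hc'.2.1 with h | h
              · linarith [hc'.2.2.1]
              · rcases hc'.2.2.2 w hc.2.1 with h' | h'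
                · linarith [hc.2.2.1]
                · linarith
            exact hx1 (e ▸ hxw)
          · exact ⟨z', hz', w', hc', hxw⟩)
      refine ⟨h1.trans h0, fun y hy => ?_, fun x => ?_⟩
      · simp [h1Z y hy, hfix y hy]
      · simpa using h1s x
    · apply ih v hv hZ hm
      intro x hx
      obtain ⟨z', hz', w', hc', hxw⟩ := hbad x hx
      rcases Finset.mem_insert.1 hz' with rfl | hz'
      · exact absurd ⟨w', hc'⟩ hc
      · exact ⟨z', hz', w', hc', hxw⟩

end Reg
namespace Reg

open Polynomial Filter in
lemma eventually_sign_lead (P : ℝ[X]) (hP : P ≠ 0) :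
    ∀ᶠ x in atTop, SignType.sign (P.eval x) = SignType.sign P.leadingCoeff := by
  by_cases hd : 0 < P.degree
  · rcases lt_trichotomy P.leadingCoeff 0 with h | h | h
    · have := P.tendsto_atBot_of_leadingCoeff_nonpos hd h.le
      filter_upwards [this.eventually_lt_atBot 0] with x hx
      rw [sign_neg hx, sign_neg h]
    · exact absurd (leadingCoeff_eq_zero.1 h) hP
    · have := P.tendsto_atTop_of_leadingCoeff_nonneg hd h.le
      filter_upwards [this.eventually_gt_atTop 0] with x hx
      rw [sign_pos hx, sign_pos h]
  · have := eq_C_of_degree_le_zero (not_lt.1 hd)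
    rw [this]
    simp

open Polynomial Filter in
lemma eventually_sign_deriv (P : ℝ[X]) (hP : derivative P ≠ 0) :
    ∀ᶠ x in atTop, SignType.sign (P.eval x) = SignType.sign ((derivative P).eval x) := by
  have hP0 : P ≠ 0 := by rintro rfl; simp at hP
  have hd : 0 < P.natDegree := by
    by_contra h
    exact hP (derivative_of_natDegree_zero (by omega))
  filter_upwards [eventually_sign_lead P hP0, eventually_sign_lead _ hP] with x h1 h2
  rw [h1, h2]
  have : (derivative P).leadingCoeff = P.leadingCoeff * P.natDegree := by
    rw [leadingCoeff, natDegree_derivative, coeff_derivative]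
    rw [Nat.sub_add_cancel hd, ← leadingCoeff]
    congr 1
    have : ((P.natDegree - 1 + 1 : ℕ) : ℝ) = P.natDegree := by rw [Nat.sub_add_cancel hd]
    exact_mod_cast this
  rw [this, sign_mul, sign_pos (a := (P.natDegree : ℝ)) (by exact_mod_cast hd), mul_one]

open Polynomial Filter in
lemma eventually_sign_deriv_bot (P : ℝ[X]) (hP : derivative P ≠ 0) :
    ∀ᶠ x in atBot, SignType.sign (P.eval x) = - SignType.sign ((derivative P).eval x) := by
  have h := eventually_sign_deriv (P.comp (-Polynomial.X)) (by
    intro h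
    rw [derivative_comp] at h
    have h : (derivative P).comp (-Polynomial.X) = 0 := by simpa using h
    exact hP (by
      have := congrArg (fun q : ℝ[X] => q.comp (-Polynomial.X)) h
      simpa [comp_assoc] using this))
  have := tendsto_neg_atBot_atTop (G := ℝ) |>.eventually h
  filter_upwards [this] with x hx
  simpa [derivative_comp, Left.sign_neg] using hx

open Polynomial in
lemma sign_const_of_noroot (g : ℝ[X]) {x y : ℝ} (h : ∀ z ∈ Set.uIcc x y, g.eval z ≠ 0) :
    SignType.sign (g.eval x) = SignType.sign (g.eval y) := by
  have hx := h x Set.left_mem_uIcc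
  have hy := h y Set.right_mem_uIcc
  by_contra hne
  have : (0:ℝ) ∈ Set.uIcc (g.eval x) (g.eval y) := by
    rcases lt_or_gt_of_ne hx with a | a <;> rcases lt_or_gt_of_ne hy with b | b
    · rw [sign_neg a, sign_neg b] at hne; exact absurd rfl hne
    · exact Set.mem_uIcc.2 (Or.inl ⟨a.le, b.le⟩)
    · exact Set.mem_uIcc.2 (Or.inr ⟨b.le, a.le⟩)
    · rw [sign_pos a, sign_pos b] at hne; exact absurd rfl hne
  obtain ⟨z, hz, hz0⟩ := intermediate_value_uIcc g.continuous.continuousOn this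
  exact h z hz hz0

open Polynomial in
/-- The order isomorphism matches the signs of the two polynomials. -/
def Matched (φ : ℝ ≃o ℝ) (a b : ℝ[X]) : Prop :=
  ∀ x, SignType.sign (a.eval x) = SignType.sign (b.eval (φ x))

open Polynomial in
lemma Matched.ne_zero {φ : ℝ ≃o ℝ} {a b : ℝ[X]} (h : Matched φ a b) (ha : a ≠ 0) : b ≠ 0 := by
  rintro rfl
  apply ha
  apply Polynomial.funext
  intro x
  have := h x
  simpa using this

open Polynomial in
lemma deriv_mono_aux (p : ℝ[X]) {z w : ℝ} (h : ∀ x ∈ Set.Ioo z w, 0 < (derivative p).eval x) :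
    StrictMonoOn (fun x => p.eval x) (Set.Icc z w) := by
  apply strictMonoOn_of_deriv_pos (convex_Icc z w) p.continuous.continuousOn
  intro x hx
  rw [interior_Icc] at hx
  simpa using h x hx

open Polynomial in
lemma deriv_anti_aux (p : ℝ[X]) {z w : ℝ} (h : ∀ x ∈ Set.Ioo z w, (derivative p).eval x < 0) :
    StrictAntiOn (fun x => p.eval x) (Set.Icc z w) := by
  apply strictAntiOn_of_deriv_neg (convex_Icc z w) p.continuous.continuousOn
  intro x hx
  rw [interior_Icc] at hx
  simpa using h x hx

open Polynomial Filter in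
/-- Adding one polynomial to a matched family. -/
lemma step (G : Finset (ℝ[X] × ℝ[X])) (φ : ℝ ≃o ℝ) (hG : ∀ g ∈ G, Matched φ g.1 g.2)
    (p q : ℝ[X]) (hd : (derivative p, derivative q) ∈ G)
    (h0 : SignType.sign (p.coeff 0) = SignType.sign (q.coeff 0))
    (h1 : ∀ g ∈ G, g.1 ≠ 0 → ∀ x, g.1.eval x = 0 →
      SignType.sign (p.eval x) = SignType.sign (q.eval (φ x))) :
    ∃ ψ : ℝ ≃o ℝ, (∀ g ∈ G, Matched ψ g.1 g.2) ∧ Matched ψ p q := by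
  classical
  have hmd : Matched φ (derivative p) (derivative q) := hG _ hd
  by_cases hp0 : derivative p = 0
  · have hq0 : derivative q = 0 := by
      apply Polynomial.funext
      intro x
      have := hmd (φ.symm x)
      rw [hp0] at this
      simp only [Polynomial.eval_zero, sign_zero, OrderIso.apply_symm_apply] at this
      simpa using (sign_eq_zero_iff.1 this.symm)
    refine ⟨φ, hG, fun x => ?_⟩
    have e1 := eq_C_of_natDegree_eq_zero (derivative_eq_zero.1 hp0)
    have e2 := eq_C_of_natDegree_eq_zero (derivative_eq_zero.1 hq0)
    rw [e1, e2]; simpa using h0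
  have hq0 : derivative q ≠ 0 := hmd.ne_zero hp0
  -- ends
  have htop : ∀ᶠ x in atTop, SignType.sign (p.eval x) = SignType.sign (q.eval (φ x)) := by
    filter_upwards [eventually_sign_deriv p hp0,
      φ.tendsto_atTop.eventually (eventually_sign_deriv q hq0)] with x a b
    rw [a, b, hmd x]
  have hbot : ∀ᶠ x in atBot, SignType.sign (p.eval x) = SignType.sign (q.eval (φ x)) := by
    filter_upwards [eventually_sign_deriv_bot p hp0,
      φ.tendsto_atBot.eventually (eventually_sign_deriv_bot q hq0)] with x a b
    rw [a, b, hmd x]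
  obtain ⟨y1, hy1⟩ := eventually_atTop.1 htop
  obtain ⟨y0, hy0⟩ := eventually_atBot.1 hbot
  let Z : Finset ℝ := insert y0 (insert y1 (G.biUnion fun g => g.1.roots.toFinset))
  have hZroot : ∀ g ∈ G, g.1 ≠ 0 → ∀ x, g.1.eval x = 0 → x ∈ Z := by
    intro g hg hg0 x hx
    simp only [Z, Finset.mem_insert, Finset.mem_biUnion]
    refine Or.inr (Or.inr ⟨g, hg, ?_⟩)
    simp [hg0, hx]
  have hZ : ∀ z ∈ Z, SignType.sign (p.eval z) = SignType.sign (q.eval (φ z)) := by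
    intro z hz
    simp only [Z, Finset.mem_insert, Finset.mem_biUnion] at hz
    rcases hz with rfl | rfl | ⟨g, hg, hz⟩
    · exact hy0 _ le_rfl
    · exact hy1 _ le_rfl
    · simp at hz
      exact h1 g hg hz.1 z hz.2
  obtain ⟨h, hhZ, hhs⟩ := fix_all Z (u := fun x => p.eval x) p.continuous Z
    (fun x => q.eval (φ x)) (q.continuous.comp φ.continuous) hZ
    (by
      intro z w hc
      have hnr : ∀ x ∈ Set.Ioo z w, (derivative p).eval x ≠ 0 := by
        intro x hx hx0
        rcases hc.2.2.2 x (hZroot _ hd hp0 x hx0) with h | h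
        · exact absurd hx.1 (not_lt.2 h)
        · exact absurd hx.2 (not_lt.2 h)
      obtain ⟨m, hm⟩ := exists_between hc.2.2.1
      have hs : ∀ x ∈ Set.Ioo z w, SignType.sign ((derivative p).eval x) =
          SignType.sign ((derivative p).eval m) := by
        intro x hx
        apply sign_const_of_noroot
        intro y hy
        exact hnr y (Set.OrdConnected.uIcc_subset Set.ordConnected_Ioo hx hm hy)
      have hq : ∀ y ∈ Set.Ioo (φ z) (φ w), SignType.sign ((derivative q).eval y) =
          SignType.sign ((derivative p).eval m) := by
        intro y hy
        have hx : φ.symm y ∈ Set.Ioo z w := by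
          constructor
          · rw [φ.lt_symm_apply]; exact hy.1
          · rw [φ.symm_apply_lt]; exact hy.2
        rw [← hs _ hx, hmd]; simp
      have hmap : ∀ x ∈ Set.Icc z w, φ x ∈ Set.Icc (φ z) (φ w) := fun x hx =>
        ⟨φ.monotone hx.1, φ.monotone hx.2⟩
      rcases lt_or_gt_of_ne (hnr m hm) with hneg | hpos
      · right
        rw [sign_neg hneg] at hs hq
        refine ⟨deriv_anti_aux p fun x hx => sign_eq_neg_one_iff.1 (hs x hx), ?_⟩
        have := deriv_anti_aux q fun x hx => sign_eq_neg_one_iff.1 (hq x hx)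
        exact fun x hx y hy hxy => this (hmap x hx) (hmap y hy) (φ.strictMono hxy)
      · left
        rw [sign_pos hpos] at hs hq
        refine ⟨deriv_mono_aux p fun x hx => sign_eq_one_iff.1 (hs x hx), ?_⟩
        have := deriv_mono_aux q fun x hx => sign_eq_one_iff.1 (hq x hx)
        exact fun x hx y hy hxy => this (hmap x hx) (hmap y hy) (φ.strictMono hxy))
    (by
      intro x hx
      have hx0 : y0 < x := by
        by_contra hc
        exact hx (hy0 x (not_lt.1 hc))
      have hx1 : x < y1 := by
        by_contra hc
        exact hx (hy1 x (not_lt.1 hc))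
      have hxZ : x ∉ Z := fun hc => hx (hZ x hc)
      have n0 : (Z.filter (· < x)).Nonempty := ⟨y0, by simp [Z, hx0]⟩
      have n1 : (Z.filter (x < ·)).Nonempty := ⟨y1, by simp [Z, hx1]⟩
      have m0 := Finset.mem_filter.1 (Finset.max'_mem _ n0)
      have m1 := Finset.mem_filter.1 (Finset.min'_mem _ n1)
      refine ⟨_, m0.1, _, ⟨m0.1, m1.1, m0.2.trans m1.2, ?_⟩, m0.2, m1.2⟩
      intro y hy
      rcases lt_trichotomy y x with hlt | rfl | hlt
      · exact Or.inl (Finset.le_max' _ _ (Finset.mem_filter.2 ⟨hy, hlt⟩))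
      · exact absurd hy hxZ
      · exact Or.inr (Finset.min'_le _ _ (Finset.mem_filter.2 ⟨hy, hlt⟩)))
  refine ⟨h.trans φ, fun g hg x => ?_, fun x => by simpa using hhs x⟩
  by_cases hg0 : g.1 = 0
  · have := hG g hg (h x)
    rw [hg0] at this ⊢
    simpa using this
  have e : SignType.sign (g.1.eval x) = SignType.sign (g.1.eval (h x)) := by
    by_cases hxZ : x ∈ Z
    · rw [hhZ x hxZ]
    apply sign_const_of_noroot
    intro z hz hz0
    have hzZ := hZroot g hg hg0 z hz0
    have hfix := hhZ z hzZ
    have hne : z ≠ x := by rintro rfl; exact hxZ hzZ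
    rcases Set.mem_uIcc.1 hz with ⟨a, b⟩ | ⟨a, b⟩
    · have : x < z := lt_of_le_of_ne a (Ne.symm hne)
      have := h.strictMono this
      linarith
    · have : z < x := lt_of_le_of_ne b hne
      have := h.strictMono this
      linarith
  rw [e]
  simpa using hG g hg (h x)

end Reg
namespace Reg

open Polynomial in
lemma pdiv_aux {A : Type} [CommRing A] (Q : A[X]) (hQ : Q ≠ 0) (N : ℕ) :
    ∀ P : A[X], P.degree < (N : ℕ) → ∃ (e : ℕ) (B R : A[X]),
      Polynomial.C Q.leadingCoeff ^ e * P = Q * B + R ∧ R.degree < Q.degree := by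
  induction N with
  | zero =>
    intro P hP
    have : P = 0 := by
      rw [← degree_eq_bot]
      exact Nat.WithBot.lt_zero_iff.1 hP
    refine ⟨0, 0, 0, by simp [this], ?_⟩
    rw [degree_zero]
    exact bot_lt_iff_ne_bot.2 (mt degree_eq_bot.1 hQ)
  | succ N ih =>
    intro P hP
    by_cases hlt : P.degree < Q.degree
    · exact ⟨0, 0, P, by simp, hlt⟩
    have hm : Q.natDegree ≤ N := by
      by_contra h
      apply hlt
      refine hP.trans_le ?_
      rw [degree_eq_natDegree hQ]
      exact_mod_cast (by omega : N + 1 ≤ Q.natDegree)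
    obtain ⟨e, B, R, h1, h2⟩ := ih
      (Polynomial.C Q.leadingCoeff * P -
        Polynomial.C (P.coeff N) * (Q * Polynomial.X ^ (N - Q.natDegree))) (by
        rw [degree_lt_iff_coeff_zero]
        intro k hk
        rw [Polynomial.coeff_sub, Polynomial.coeff_C_mul, Polynomial.coeff_C_mul,
          Polynomial.coeff_mul_X_pow']
        rw [if_pos (by omega)]
        rcases hk.eq_or_lt with rfl | hk
        · rw [Nat.sub_sub_self hm, ← leadingCoeff]; ring
        · rw [(degree_lt_iff_coeff_zero _ _).1 hP k (by omega),
            coeff_eq_zero_of_natDegree_lt (p := Q) (by omega)]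
          ring)
    refine ⟨e + 1, B + Polynomial.C Q.leadingCoeff ^ e *
      (Polynomial.C (P.coeff N) * Polynomial.X ^ (N - Q.natDegree)), R, ?_, h2⟩
    linear_combination h1

open Polynomial in
lemma pdiv {A : Type} [CommRing A] (P Q : A[X]) (hQ : Q ≠ 0) :
    ∃ (R : A[X]), (∃ (e : ℕ) (B : A[X]),
      Polynomial.C Q.leadingCoeff ^ e * P = Q * B + R) ∧ R.degree < Q.degree := by
  obtain ⟨e, B, R, h1, h2⟩ := pdiv_aux Q hQ (P.natDegree + 1) P
    (by
      refine degree_le_natDegree.trans_lt ?_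
      exact_mod_cast Nat.lt_succ_self _)
  exact ⟨R, ⟨e, B, h1⟩, h2⟩

open Polynomial in
lemma exists_closure {A : Type} [CommRing A] (ops : A[X] → Finset A[X])
    (hops : ∀ Q, ∀ R ∈ ops Q, R.degree < Q.degree) (Q : A[X]) :
    ∃ S : Finset A[X], Q ∈ S ∧ (∀ Q' ∈ S, ops Q' ⊆ S) ∧ ∀ Q' ∈ S, Q'.degree ≤ Q.degree := by
  classical
  induction hd : Q.degree using WellFoundedLT.induction generalizing Q with
  | ind d ih =>
    subst hd
    have : ∀ R : A[X], ∃ S : Finset A[X], R ∈ ops Q → (R ∈ S ∧ (∀ Q' ∈ S, ops Q' ⊆ S) ∧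
        ∀ Q' ∈ S, Q'.degree ≤ R.degree) := by
      intro R
      by_cases hR : R ∈ ops Q
      · obtain ⟨S, hS⟩ := ih _ (hops Q R hR) R rfl
        exact ⟨S, fun _ => hS⟩
      · exact ⟨∅, fun h => absurd h hR⟩
    choose S hS using this
    refine ⟨insert Q ((ops Q).biUnion S), Finset.mem_insert_self _ _, ?_, ?_⟩
    · intro Q' hQ' R hR
      rcases Finset.mem_insert.1 hQ' with rfl | hQ'
      · exact Finset.mem_insert_of_mem (Finset.mem_biUnion.2 ⟨R, hR, (hS R hR).1⟩)
      · obtain ⟨R', hR', hQ'⟩ := Finset.mem_biUnion.1 hQ'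
        exact Finset.mem_insert_of_mem (Finset.mem_biUnion.2
          ⟨R', hR', (hS R' hR').2.1 Q' hQ' hR⟩)
    · intro Q' hQ'
      rcases Finset.mem_insert.1 hQ' with rfl | hQ'
      · exact le_rfl
      · obtain ⟨R', hR', hQ'⟩ := Finset.mem_biUnion.1 hQ'
        exact ((hS R' hR').2.2 Q' hQ').trans (hops Q R' hR').le

open Polynomial in
lemma map_eraseLead {A : Type} [CommRing A] (f : A →+* ℝ) (Q : A[X])
    (h : f Q.leadingCoeff = 0) : Q.eraseLead.map f = Q.map f := by
  have e := congrArg (Polynomial.map f) (eraseLead_add_monomial_natDegree_leadingCoeff Q)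
  rw [Polynomial.map_add, Polynomial.map_monomial, h, Polynomial.monomial_zero_right,
    add_zero] at e
  exact e

open Polynomial in
theorem qe_iso {A T : Type} [CommRing A] (ev : T → A →+* ℝ) (d : ℕ) :
    ∀ F : Finset A[X], (∀ P ∈ F, P.degree < d) → ∃ K : Finset A, ∀ t t' : T,
      (∀ c ∈ K, SignType.sign (ev t c) = SignType.sign (ev t' c)) →
      ∃ φ : ℝ ≃o ℝ, ∀ P ∈ F, Matched φ (P.map (ev t)) (P.map (ev t')) := by
  classical
  induction d with
  | zero =>
    intro F hF
    refine ⟨∅, fun t t' _ => ⟨OrderIso.refl ℝ, fun P hP x => ?_⟩⟩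
    have : P = 0 := by
      rw [← degree_eq_bot]
      exact Nat.WithBot.lt_zero_iff.1 (hF P hP)
    simp [this]
  | succ d ih =>
    intro F hF
    have hrem : ∀ P Q : A[X], ∃ R : A[X], Q ≠ 0 → (∃ (e : ℕ) (B : A[X]),
        Polynomial.C Q.leadingCoeff ^ e * P = Q * B + R) ∧ R.degree < Q.degree := by
      intro P Q
      by_cases hQ : Q = 0
      · exact ⟨0, fun h => absurd hQ h⟩
      · obtain ⟨R, hR⟩ := pdiv P Q hQ
        exact ⟨R, fun _ => hR⟩
    choose rem hrem using hrem
    let ops : A[X] → Finset A[X] := fun Q =>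
      if Q = 0 then ∅ else insert Q.eraseLead (F.image fun P => rem P Q)
    have hops : ∀ Q, ∀ R ∈ ops Q, R.degree < Q.degree := by
      intro Q R hR
      by_cases hQ : Q = 0
      · simp [ops, hQ] at hR
      · simp only [ops, if_neg hQ, Finset.mem_insert, Finset.mem_image] at hR
        rcases hR with rfl | ⟨P, hP, rfl⟩
        · exact degree_eraseLead_lt hQ
        · exact (hrem P Q hQ).2
    choose cl hcl1 hcl2 hcl3 using exists_closure ops hops
    let G0 : Finset A[X] := F.image (fun P => derivative P) ∪ F.biUnion ops
    have hlt : ∀ x y : WithBot ℕ, x < y → y < ((d + 1 : ℕ) : WithBot ℕ) → x < (d : ℕ) := by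
      intro x y hxy hy
      induction y with
      | bot => simp at hxy
      | coe y =>
        refine hxy.trans_le ?_
        rw [Nat.cast_withBot] at hy ⊢
        exact WithBot.coe_le_coe.2 (Nat.lt_succ_iff.1 (WithBot.coe_lt_coe.1 hy))
    have hG0 : ∀ Q ∈ G0, Q.degree < d := by
      intro Q hQ
      rcases Finset.mem_union.1 hQ with hQ | hQ
      · obtain ⟨P, hP, rfl⟩ := Finset.mem_image.1 hQ
        by_cases h0 : P = 0
        · simp [h0]
        · exact hlt _ _ (degree_derivative_lt h0) (hF P hP)
      · obtain ⟨P, hP, hQ⟩ := Finset.mem_biUnion.1 hQ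
        exact hlt _ _ (hops P Q hQ) (hF P hP)
    let F' : Finset A[X] := G0.biUnion cl
    have hF'd : ∀ Q ∈ F', Q.degree < d := by
      intro Q hQ
      obtain ⟨R, hR, hQ⟩ := Finset.mem_biUnion.1 hQ
      exact (hcl3 R Q hQ).trans_lt (hG0 R hR)
    have hG0F' : G0 ⊆ F' := fun Q hQ => Finset.mem_biUnion.2 ⟨Q, hQ, hcl1 Q⟩
    have hops' : ∀ Q ∈ F' ∪ F, ops Q ⊆ F' := by
      intro Q hQ
      rcases Finset.mem_union.1 hQ with hQ | hQ
      · obtain ⟨R, hR, hQ⟩ := Finset.mem_biUnion.1 hQ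
        exact fun x hx => Finset.mem_biUnion.2 ⟨R, hR, hcl2 R Q hQ hx⟩
      · exact fun x hx => hG0F' (Finset.mem_union_right _ (Finset.mem_biUnion.2 ⟨Q, hQ, hx⟩))
    obtain ⟨K, hK⟩ := ih F' hF'd
    refine ⟨K ∪ ((F' ∪ F).image leadingCoeff ∪ F.image (fun P => P.coeff 0)), ?_⟩
    intro t t' hs
    obtain ⟨φ0, hφ0⟩ := hK t t' (fun c hc => hs c (Finset.mem_union_left _ hc))
    have hlc : ∀ Q ∈ F' ∪ F, SignType.sign (ev t Q.leadingCoeff) =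
        SignType.sign (ev t' Q.leadingCoeff) := fun Q hQ =>
      hs _ (Finset.mem_union_right _ (Finset.mem_union_left _ (Finset.mem_image_of_mem _ hQ)))
    -- matching at roots
    have hroot : ∀ φ : ℝ ≃o ℝ, (∀ Q ∈ F', Matched φ (Q.map (ev t)) (Q.map (ev t'))) →
        ∀ P ∈ F, ∀ Q ∈ F' ∪ F, Q.map (ev t) ≠ 0 → ∀ x, (Q.map (ev t)).eval x = 0 →
        (Q.map (ev t')).eval (φ x) = 0 →
        SignType.sign ((P.map (ev t)).eval x) = SignType.sign ((P.map (ev t')).eval (φ x)) := by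
      intro φ hφ P hP Q
      induction hd : Q.degree using WellFoundedLT.induction generalizing Q with
      | ind dd ihd =>
        subst hd
        intro hQ hQt x hx hx'
        have hQ0 : Q ≠ 0 := by rintro rfl; simp at hQt
        by_cases hl : ev t Q.leadingCoeff = 0
        · have hl' : ev t' Q.leadingCoeff = 0 := by
            have := hlc Q hQ
            rw [hl, sign_zero] at this
            exact sign_eq_zero_iff.1 this.symm
          have hmem : Q.eraseLead ∈ F' := hops' Q hQ (by simp [ops, hQ0])
          have e1 := map_eraseLead (ev t) Q hl
          have e2 := map_eraseLead (ev t') Q hl'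
          exact ihd _ (degree_eraseLead_lt hQ0) Q.eraseLead rfl (Finset.mem_union_left _ hmem)
            (by rwa [e1]) x (by rwa [e1]) (by rwa [e2])
        · have hmem : rem P Q ∈ F' := hops' Q hQ (by
            simp only [ops, if_neg hQ0]
            exact Finset.mem_insert_of_mem (Finset.mem_image_of_mem _ hP))
          obtain ⟨⟨e, B, he⟩, -⟩ := hrem P Q hQ0
          have key : ∀ (s : T) (y : ℝ), (Q.map (ev s)).eval y = 0 →
              (ev s Q.leadingCoeff) ^ e * (P.map (ev s)).eval y =
                ((rem P Q).map (ev s)).eval y := by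
            intro s y hy
            have := congrArg (fun p => (p.map (ev s)).eval y) he
            simpa [hy] using this
          have k1 := congrArg SignType.sign (key t x hx)
          have k2 := congrArg SignType.sign (key t' _ hx')
          rw [← hφ _ hmem x, ← k1, sign_mul, sign_mul, sign_pow, sign_pow, ← hlc Q hQ] at k2
          have hne : SignType.sign (ev t Q.leadingCoeff) ^ e ≠ 0 :=
            pow_ne_zero _ (by simpa using hl)
          exact (mul_left_cancel₀ hne k2).symm
    have hfin : ∀ S : Finset A[X], S ⊆ F → ∃ φ : ℝ ≃o ℝ,
        ∀ Q ∈ F' ∪ S, Matched φ (Q.map (ev t)) (Q.map (ev t')) := by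
      intro S
      induction S using Finset.induction_on with
      | empty => exact fun _ => ⟨φ0, by simpa using hφ0⟩
      | insert P S hPS ihS =>
        intro hSF
        have hPF : P ∈ F := hSF (Finset.mem_insert_self _ _)
        have hSF' : S ⊆ F := fun x hx => hSF (Finset.mem_insert_of_mem hx)
        obtain ⟨φ, hφ⟩ := ihS hSF'
        obtain ⟨ψ, h1, h2⟩ := step ((F' ∪ S).image fun Q => (Q.map (ev t), Q.map (ev t'))) φ
          (by
            intro g hg
            obtain ⟨Q, hQ, rfl⟩ := Finset.mem_image.1 hg
            exact hφ Q hQ)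
          (P.map (ev t)) (P.map (ev t'))
          (by
            rw [derivative_map, derivative_map]
            exact Finset.mem_image.2 ⟨derivative P, Finset.mem_union_left _ (hG0F'
              (Finset.mem_union_left _ (Finset.mem_image_of_mem _ hPF))), rfl⟩)
          (by
            rw [Polynomial.coeff_map, Polynomial.coeff_map]
            exact hs _ (Finset.mem_union_right _ (Finset.mem_union_right _
              (Finset.mem_image_of_mem _ hPF))))
          (by
            intro g hg hg0 x hx
            obtain ⟨Q, hQ, rfl⟩ := Finset.mem_image.1 hg
            refine hroot φ (fun Q hQ => hφ Q (Finset.mem_union_left _ hQ)) P hPF Q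
              (Finset.union_subset_union_right hSF' hQ) hg0 x hx ?_
            have := hφ Q hQ x
            simp only at hx
            rw [hx, sign_zero] at this
            exact sign_eq_zero_iff.1 this.symm)
        refine ⟨ψ, fun Q hQ => ?_⟩
        rw [Finset.union_insert] at hQ
        rcases Finset.mem_insert.1 hQ with rfl | hQ
        · exact h2
        · exact h1 _ (Finset.mem_image_of_mem (fun Q => (Q.map (ev t), Q.map (ev t'))) hQ)
    obtain ⟨φ, hφ⟩ := hfin F (Finset.Subset.refl _)
    exact ⟨φ, fun P hP => hφ P (Finset.mem_union_right _ hP)⟩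

open Polynomial in
theorem qe_one {A T : Type} [CommRing A] (ev : T → A →+* ℝ) (F : Finset A[X]) :
    ∃ K : Finset A, ∀ t t' : T,
      (∀ c ∈ K, SignType.sign (ev t c) = SignType.sign (ev t' c)) →
      ∀ x : ℝ, ∃ x' : ℝ, ∀ P ∈ F, SignType.sign (P.eval₂ (ev t) x) =
        SignType.sign (P.eval₂ (ev t') x') := by
  obtain ⟨K, hK⟩ := qe_iso ev (F.sup natDegree + 1) F (by
    intro P hP
    refine degree_le_natDegree.trans_lt ?_
    exact_mod_cast Nat.lt_succ_of_le (Finset.le_sup (f := natDegree) hP))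
  refine ⟨K, fun t t' h x => ?_⟩
  obtain ⟨φ, hφ⟩ := hK t t' h
  refine ⟨φ x, fun P hP => ?_⟩
  rw [Polynomial.eval₂_eq_eval_map, Polynomial.eval₂_eq_eval_map]
  exact hφ P hP x

lemma eval₂_cons {A : Type} [CommRing A] (f : A →+* ℝ) (n : ℕ) (y : ℝ) (s : Fin n → ℝ)
    (P : MvPolynomial (Fin (n + 1)) A) :
    MvPolynomial.eval₂ f (Fin.cons y s : Fin (n + 1) → ℝ) P =
      Polynomial.eval₂ (MvPolynomial.eval₂Hom f s) y (MvPolynomial.finSuccEquiv A n P) := by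
  have : MvPolynomial.eval₂Hom f (Fin.cons y s : Fin (n + 1) → ℝ) =
      (Polynomial.eval₂RingHom (MvPolynomial.eval₂Hom f s) y).comp
        (MvPolynomial.finSuccEquiv A n).toRingEquiv.toRingHom := by
    apply MvPolynomial.ringHom_ext
    · intro r
      simp [MvPolynomial.finSuccEquiv_apply]
    · intro i
      refine Fin.cases ?_ (fun j => ?_) i
      · simp [MvPolynomial.finSuccEquiv_X_zero]
      · simp [MvPolynomial.finSuccEquiv_X_succ]
  exact congrArg (fun g => g P) this

/-- Quantifier elimination over the reals (in sign-determined form). -/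
theorem qe {A T : Type} [CommRing A] (ev : T → A →+* ℝ) (n : ℕ) :
    ∀ F : Finset (MvPolynomial (Fin n) A), ∃ K : Finset A, ∀ t t' : T,
      (∀ c ∈ K, SignType.sign (ev t c) = SignType.sign (ev t' c)) →
      ∀ y : Fin n → ℝ, ∃ y' : Fin n → ℝ, ∀ P ∈ F,
        SignType.sign (P.eval₂ (ev t) y) = SignType.sign (P.eval₂ (ev t') y') := by
  classical
  induction n with
  | zero =>
    intro F
    refine ⟨F.image (fun P => MvPolynomial.isEmptyAlgEquiv A (Fin 0) P), fun t t' h y =>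
      ⟨y, fun P hP => ?_⟩⟩
    have := h _ (Finset.mem_image_of_mem _ hP)
    have e : ∀ s, P.eval₂ (ev s) y = ev s (MvPolynomial.isEmptyAlgEquiv A (Fin 0) P) := by
      intro s
      conv_lhs => rw [← (MvPolynomial.isEmptyAlgEquiv A (Fin 0)).symm_apply_apply P]
      simp
    rw [e, e, this]
  | succ n ih =>
    intro F
    obtain ⟨K1, hK1⟩ := qe_one (T := T × (Fin n → ℝ))
      (fun s => MvPolynomial.eval₂Hom (ev s.1) s.2) (F.image (MvPolynomial.finSuccEquiv A n))
    obtain ⟨K, hK⟩ := ih K1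
    refine ⟨K, fun t t' h y => ?_⟩
    obtain ⟨ys, hys⟩ := hK t t' h (Fin.tail y)
    obtain ⟨y0, hy0⟩ := hK1 (t, Fin.tail y) (t', ys) hys (y 0)
    refine ⟨Fin.cons y0 ys, fun P hP => ?_⟩
    have := hy0 _ (Finset.mem_image_of_mem _ hP)
    rw [eval₂_cons, ← this, ← eval₂_cons, Fin.cons_self_tail]

end Reg
namespace Reg

open Polynomial Filter in
lemma poly_bound (b : ℝ[X]) : ∃ M : ℕ, ∀ᶠ u in atTop, |b.eval u| ≤ u ^ M := by
  refine ⟨b.natDegree + 1, ?_⟩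
  have h : (fun x => b.eval x) =o[atTop] fun x => (Polynomial.X ^ (b.natDegree + 1) : ℝ[X]).eval x := by
    apply Polynomial.isLittleO_atTop_of_degree_lt
    rw [Polynomial.degree_X_pow]
    refine degree_le_natDegree.trans_lt ?_
    exact_mod_cast Nat.lt_succ_self _
  filter_upwards [h.bound one_pos, eventually_ge_atTop 0] with u hu hu0
  simpa [abs_of_nonneg hu0] using hu

open Polynomial Filter in
lemma growth (k : ℕ) : ∀ c : ℝ[X][X], c ≠ 0 → c.natDegree = k →
    ∃ (N : ℕ) (δ : ℝ), 0 < δ ∧ ∀ᶠ u in atTop, ∀ w, u ^ N ≤ w →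
      δ ≤ |c.evalEval u w| ∧ ∀ w', u ^ N ≤ w' →
        SignType.sign (c.evalEval u w) = SignType.sign (c.evalEval u w') := by
  induction k with
  | zero =>
    intro c hc hk
    obtain ⟨b, rfl⟩ : ∃ b, c = Polynomial.C b := ⟨_, eq_C_of_natDegree_eq_zero hk⟩
    have hb : b ≠ 0 := by rintro rfl; simp at hc
    simp only [evalEval_C]
    by_cases hd : 0 < b.degree
    · refine ⟨0, 1, one_pos, ?_⟩
      filter_upwards [(b.abs_tendsto_atTop hd).eventually_ge_atTop 1] with u hu w _
      exact ⟨hu, fun _ _ => trivial⟩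
    · have := eq_C_of_degree_le_zero (not_lt.1 hd)
      have h0 : b.coeff 0 ≠ 0 := by
        intro h; rw [h] at this; simp at this; exact hb this
      refine ⟨0, |b.coeff 0|, abs_pos.2 h0, Eventually.of_forall fun u w _ => ⟨?_, fun _ _ => trivial⟩⟩
      rw [this]; simp
  | succ k ih =>
    intro c hc hk
    have e := divX_mul_X_add c
    have hdeg : c.divX.natDegree = k := by
      rw [natDegree_divX_eq_natDegree_tsub_one, hk]; rfl
    have hne : c.divX ≠ 0 := by
      intro h
      rw [h, zero_mul, zero_add] at e
      rw [← e] at hk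
      simp at hk
    obtain ⟨N, δ, hδ, hN⟩ := ih _ hne hdeg
    obtain ⟨M, hM⟩ := poly_bound (c.coeff 0)
    refine ⟨N + M + 1, 1, one_pos, ?_⟩
    filter_upwards [hN, hM, eventually_ge_atTop 1, eventually_ge_atTop (2 / δ)]
      with u h1 h2 h3 h4
    have hval : ∀ w, c.evalEval u w = c.divX.evalEval u w * w + (c.coeff 0).eval u := by
      intro w
      conv_lhs => rw [← e]
      rw [evalEval_add, evalEval_mul, evalEval_X, Polynomial.evalEval_C]
    have key : ∀ w, u ^ (N + M + 1) ≤ w → u ^ N ≤ w ∧ 1 ≤ |c.evalEval u w| ∧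
        SignType.sign (c.evalEval u w) = SignType.sign (c.divX.evalEval u w) := by
      intro w hw
      have hwN : u ^ N ≤ w := (pow_le_pow_right₀ h3 (by omega)).trans hw
      have hwM : u ^ (M + 1) ≤ w := (pow_le_pow_right₀ h3 (by omega)).trans hw
      have hM1 : 1 ≤ u ^ M := one_le_pow₀ h3
      have hδu : 2 ≤ u * δ := by rwa [div_le_iff₀ hδ] at h4
      have hw2 : 2 * u ^ M ≤ w * δ := by
        calc 2 * u ^ M ≤ (u * δ) * u ^ M := by gcongr
          _ = u ^ (M + 1) * δ := by ring
          _ ≤ w * δ := by gcongr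
      have hw0 : 0 < w := lt_of_lt_of_le (by positivity) hwN
      obtain ⟨hd, -⟩ := h1 w hwN
      have hb := abs_le.1 h2
      refine ⟨hwN, ?_⟩
      rw [hval]
      rcases lt_or_ge (c.divX.evalEval u w) 0 with hs | hs
      · rw [abs_of_neg hs] at hd
        have : c.divX.evalEval u w * w ≤ -(2 * u ^ M) := by nlinarith
        have hneg : c.divX.evalEval u w * w + (c.coeff 0).eval u ≤ -1 := by linarith
        refine ⟨by rw [abs_of_neg (by linarith)]; linarith, ?_⟩
        rw [sign_neg hs, sign_neg (by linarith)]
      · rw [abs_of_nonneg hs] at hd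
        have : (2 * u ^ M) ≤ c.divX.evalEval u w * w := by nlinarith
        have hneg : 1 ≤ c.divX.evalEval u w * w + (c.coeff 0).eval u := by linarith
        refine ⟨by rw [abs_of_pos (by linarith)]; linarith, ?_⟩
        rw [sign_pos (lt_of_lt_of_le hδ hd), sign_pos (by linarith)]
    intro w hw
    obtain ⟨a1, a2, a3⟩ := key w hw
    refine ⟨a2, fun w' hw' => ?_⟩
    obtain ⟨b1, b2, b3⟩ := key w' hw'
    rw [a3, b3]
    exact (h1 w a1).2 w' b1

open Polynomial Filter in
lemma growth_finset (K : Finset ℝ[X][X]) : ∃ N : ℕ, ∀ᶠ u in atTop, ∀ w w', u ^ N ≤ w → u ^ N ≤ w' →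
    ∀ c ∈ K, SignType.sign (c.evalEval u w) = SignType.sign (c.evalEval u w') := by
  classical
  induction K using Finset.induction_on with
  | empty => exact ⟨0, by simp⟩
  | insert c K hcK ih =>
    obtain ⟨N, hN⟩ := ih
    have : ∃ N1 : ℕ, ∀ᶠ u in atTop, ∀ w w', u ^ N1 ≤ w → u ^ N1 ≤ w' →
        SignType.sign (c.evalEval u w) = SignType.sign (c.evalEval u w') := by
      by_cases hc : c = 0
      · exact ⟨0, by simp [hc]⟩
      · obtain ⟨N1, δ, _, h⟩ := growth _ c hc rfl
        refine ⟨N1, ?_⟩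
        filter_upwards [h] with u hu w w' hw hw'
        exact (hu w hw).2 w' hw'
    obtain ⟨N1, hN1⟩ := this
    refine ⟨N + N1, ?_⟩
    filter_upwards [hN, hN1, eventually_ge_atTop 1] with u h1 h2 h3 w w' hw hw' c' hc'
    have e1 : u ^ N ≤ u ^ (N + N1) := pow_le_pow_right₀ h3 (by omega)
    have e2 : u ^ N1 ≤ u ^ (N + N1) := pow_le_pow_right₀ h3 (by omega)
    rcases Finset.mem_insert.1 hc' with rfl | hc'
    · exact h2 w w' (e2.trans hw) (e2.trans hw')
    · exact h1 w w' (e1.trans hw) (e1.trans hw') c' hc'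

lemma dense_ne {n : ℕ} (q : MvPolynomial (Fin n) ℝ) (hq : q ≠ 0) :
    Dense {x : Fin n → ℝ | eval x q ≠ 0} := by
  rw [dense_iff_inter_open]
  intro U hU ⟨x, hx⟩
  by_contra hcon
  apply hq
  obtain ⟨ε, hε, hball⟩ := Metric.isOpen_iff.1 hU x hx
  apply MvPolynomial.funext_set (fun i => Metric.ball (x i) ε)
  · intro i
    rw [Real.ball_eq_Ioo]
    exact Set.Ioo_infinite (by linarith)
  · intro y hy
    simp only [map_zero]
    by_contra hne
    apply hcon
    refine ⟨y, hball ?_, hne⟩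
    rw [Metric.mem_ball, dist_pi_lt_iff hε]
    intro i
    exact hy i (Set.mem_univ i)

lemma sign_le_iff {a b : ℝ} (h : SignType.sign a = SignType.sign b) : 0 ≤ a ↔ 0 ≤ b := by
  rw [← sign_nonneg_iff, h, sign_nonneg_iff]

open Filter Topology in
/-- Łojasiewicz inequality. -/
theorem loj {n : ℕ} {f g : (Fin n → ℝ) → ℝ} (hf : Continuous f) (hg : Continuous g)
    {p₁ q₁ p₂ q₂ : MvPolynomial (Fin n) ℝ} (hq₁ : q₁ ≠ 0) (hq₂ : q₂ ≠ 0)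
    (h₁ : ∀ x, eval x q₁ * f x = eval x p₁) (h₂ : ∀ x, eval x q₂ * g x = eval x p₂)
    (hZ : ∀ x, f x = 0 → g x = 0) :
    ∃ N : ℕ, ∀ z, f z = 0 → ∀ᶠ y in 𝓝 z, |g y| ^ N ≤ |f y| := by
  classical
  let ι : ℝ →+* Polynomial (Polynomial ℝ) := Polynomial.C.comp Polynomial.C
  let ev : ℝ × ℝ → Polynomial (Polynomial ℝ) →+* ℝ := fun t => Polynomial.evalEvalRingHom t.1 t.2
  let m : MvPolynomial (Fin n) ℝ → MvPolynomial (Fin n) (Polynomial (Polynomial ℝ)) :=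
    fun p => MvPolynomial.map ι p
  have hm : ∀ (t : ℝ × ℝ) y p, (m p).eval₂ (ev t) y = eval y p := by
    intro t y p
    simp only [m]
    rw [MvPolynomial.eval₂_map]
    have : (ev t).comp ι = RingHom.id ℝ := by
      ext r
      simp [ev, ι]
    rw [this]; rfl
  let U : MvPolynomial (Fin n) (Polynomial (Polynomial ℝ)) := C (Polynomial.C Polynomial.X)
  let W : MvPolynomial (Fin n) (Polynomial (Polynomial ℝ)) := C Polynomial.X
  have hU : ∀ (t : ℝ × ℝ) y, U.eval₂ (ev t) y = t.1 := by intro t y; simp [U, ev]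
  have hW : ∀ (t : ℝ × ℝ) y, W.eval₂ (ev t) y = t.2 := by intro t y; simp [W, ev]
  let S : MvPolynomial (Fin n) ℝ := ∑ i, X i ^ 2
  obtain ⟨K, hK⟩ := qe ev n {m (q₁ * q₂), U - m S, U * m (p₂ ^ 2) - m (q₂ ^ 2),
    W * m (p₁ ^ 2) - m (q₁ ^ 2)}
  obtain ⟨N, hN⟩ := growth_finset K
  have hB : ∀ t : ℝ × ℝ, ∀ t' : ℝ × ℝ,
      (∀ c ∈ K, SignType.sign (ev t c) = SignType.sign (ev t' c)) →
      ∀ y, eval y (q₁ * q₂) ≠ 0 → eval y S ≤ t.1 → eval y q₂ ^ 2 ≤ t.1 * eval y p₂ ^ 2 →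
        t.2 * eval y p₁ ^ 2 < eval y q₁ ^ 2 →
      ∃ y, eval y (q₁ * q₂) ≠ 0 ∧ eval y S ≤ t'.1 ∧ eval y q₂ ^ 2 ≤ t'.1 * eval y p₂ ^ 2 ∧
        t'.2 * eval y p₁ ^ 2 < eval y q₁ ^ 2 := by
    intro t t' hs y c1 c2 c3 c4
    obtain ⟨y', hy'⟩ := hK t t' hs y
    have s1 := hy' (m (q₁ * q₂)) (by simp)
    have s2 := hy' (U - m S) (by simp)
    have s3 := hy' (U * m (p₂ ^ 2) - m (q₂ ^ 2)) (by simp)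
    have s4 := hy' (W * m (p₁ ^ 2) - m (q₁ ^ 2)) (by simp)
    simp only [MvPolynomial.eval₂_sub, MvPolynomial.eval₂_mul, hm, hU, hW, map_pow] at s1 s2 s3 s4
    refine ⟨y', ?_, ?_, ?_, ?_⟩
    · intro h0
      rw [h0, sign_zero] at s1
      exact c1 (sign_eq_zero_iff.1 s1)
    · have := (sign_le_iff s2).1 (by linarith)
      linarith
    · have := (sign_le_iff s3).1 (by linarith)
      linarith
    · by_contra hc
      have := (sign_le_iff s4).2 (by linarith)
      linarith
  -- converting between f and p/q
  have hfq : ∀ y, eval y q₁ ≠ 0 → ∀ w, (w * eval y p₁ ^ 2 < eval y q₁ ^ 2 ↔ w * f y ^ 2 < 1) := by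
    intro y hy w
    have : 0 < eval y q₁ ^ 2 := by positivity
    rw [← h₁ y]
    constructor <;> intro h
    · by_contra hc
      push Not at hc
      nlinarith
    · nlinarith
  have hgq : ∀ y, eval y q₂ ≠ 0 → ∀ u, (eval y q₂ ^ 2 ≤ u * eval y p₂ ^ 2 ↔ 1 ≤ u * g y ^ 2) := by
    intro y hy u
    have : 0 < eval y q₂ ^ 2 := by positivity
    rw [← h₂ y]
    constructor <;> intro h
    · by_contra hc
      push Not at hc
      nlinarith
    · nlinarith
  have hS : ∀ y, eval y S = ∑ i, y i ^ 2 := by intro y; simp [S]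
  -- main bound on the dense set
  have main : ∀ᶠ u in atTop, ∀ y, eval y (q₁ * q₂) ≠ 0 → eval y S ≤ u → 1 ≤ u * g y ^ 2 →
      1 ≤ u ^ N * f y ^ 2 := by
    filter_upwards [hN] with u hu y c1 c2 c3
    by_contra hc
    push Not at hc
    have c1' := c1
    rw [map_mul] at c1'
    have hcomp : IsCompact {y : Fin n → ℝ | ∑ i, y i ^ 2 ≤ u ∧ 1 ≤ u * g y ^ 2} := by
      apply Metric.isCompact_of_isClosed_isBounded
      · have k1 : IsClosed {y : Fin n → ℝ | ∑ i, y i ^ 2 ≤ u} :=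
          isClosed_le (by fun_prop) (by fun_prop)
        have k2 : IsClosed {y : Fin n → ℝ | 1 ≤ u * g y ^ 2} :=
          isClosed_le (by fun_prop) (by fun_prop)
        exact k1.inter k2
      · apply (Metric.isBounded_closedBall (x := (0 : Fin n → ℝ)) (r := |u| + 1)).subset
        intro y hy
        rw [mem_closedBall_zero_iff, pi_norm_le_iff_of_nonneg (by positivity)]
        intro i
        have h1 : y i ^ 2 ≤ ∑ i, y i ^ 2 :=
          Finset.single_le_sum (f := fun i => y i ^ 2) (fun i _ => sq_nonneg _) (Finset.mem_univ i)
        have h2 := hy.1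
        have h3 := le_abs_self u
        rw [Real.norm_eq_abs]
        apply abs_le_of_sq_le_sq _ (by positivity)
        nlinarith [abs_nonneg u]
    obtain ⟨z, hz, hzmin⟩ := hcomp.exists_isMinOn ⟨y, by rw [← hS]; exact c2, c3⟩
      ((hf.pow 2).continuousOn)
    have hzpos : 0 < f z ^ 2 := by
      have : f z ≠ 0 := by
        intro h0
        have := hz.2
        rw [hZ z h0] at this
        norm_num at this
      positivity
    set w' := max (u ^ N) (1 / f z ^ 2) with hw'
    obtain ⟨y', d1, d2, d3, d4⟩ := hB (u, u ^ N) (u, w')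
      (hu _ _ le_rfl (le_max_left _ _)) y c1 c2
      ((hgq y (right_ne_zero_of_mul c1') u).2 c3)
      ((hfq y (left_ne_zero_of_mul c1') _).2 hc)
    rw [map_mul] at d1
    have d3 := (hgq y' (right_ne_zero_of_mul d1) _).1 d3
    have d4 := (hfq y' (left_ne_zero_of_mul d1) _).1 d4
    have hmin : f z ^ 2 ≤ f y' ^ 2 := hzmin ⟨by rw [← hS]; exact d2, d3⟩
    have : 1 ≤ w' * f y' ^ 2 := by
      calc 1 = 1 / f z ^ 2 * f z ^ 2 := by rw [one_div, inv_mul_cancel₀ hzpos.ne']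
        _ ≤ w' * f y' ^ 2 := by
          gcongr
          exact le_max_right _ _
    simp only at d4
    linarith
  obtain ⟨u0, hu0⟩ := eventually_atTop.1 main
  refine ⟨N + 1, fun z hz => ?_⟩
  have hgz := hZ z hz
  set R := max (max u0 (eval z S + 1)) 1 with hR
  have hR1 : 1 ≤ R := le_max_right _ _
  have hR2 : u0 ≤ R := (le_max_left _ _).trans (le_max_left _ _)
  have hR3 : eval z S + 1 ≤ R := (le_max_right _ _).trans (le_max_left _ _)
  have ev1 : ∀ᶠ y in 𝓝 z, R * g y ^ 2 < 1 := by
    have : Tendsto (fun y => R * g y ^ 2) (𝓝 z) (𝓝 (R * g z ^ 2)) :=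
      (Continuous.tendsto (by fun_prop) z)
    exact this.eventually_lt_const (by simp [hgz])
  have ev2 : ∀ᶠ y in 𝓝 z, eval y S < eval z S + 1 := by
    have : Continuous fun y : Fin n → ℝ => eval y S := MvPolynomial.continuous_eval S
    exact this.tendsto z |>.eventually_lt_const (by linarith)
  obtain ⟨O, hO, hOo, hzO⟩ := eventually_nhds_iff.1 (ev1.and ev2)
  have onD : ∀ y ∈ O ∩ {x | eval x (q₁ * q₂) ≠ 0}, |g y| ^ (N + 1) ≤ |f y| := by
    rintro y ⟨hyO, hyD⟩
    obtain ⟨e1, e2⟩ := hO y hyO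
    by_cases hg0 : g y = 0
    · simp [hg0]
    have hgp : 0 < g y ^ 2 := by positivity
    have hRu : R ≤ 1 / g y ^ 2 := by rw [le_div_iff₀ hgp]; exact e1.le
    have := hu0 (1 / g y ^ 2) (hR2.trans hRu) y hyD (by linarith)
      (by rw [one_div, inv_mul_cancel₀ hgp.ne'])
    have h3 : (g y ^ 2) ^ N ≤ f y ^ 2 := by
      rw [one_div, inv_pow, ← div_eq_inv_mul, le_div_iff₀ (by positivity), one_mul] at this
      exact this
    have hg1 : |g y| ≤ 1 := by
      rw [abs_le_one_iff_mul_self_le_one]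
      nlinarith
    have h4 : |g y| ^ N ≤ |f y| := by
      apply le_of_sq_le_sq _ (abs_nonneg _)
      rw [sq_abs, ← pow_mul, mul_comm, pow_mul, sq_abs]
      exact h3
    refine le_trans ?_ h4
    exact pow_le_pow_of_le_one (abs_nonneg _) hg1 (by omega)
  have hD := dense_ne (q₁ * q₂) (mul_ne_zero hq₁ hq₂)
  have hcl : O ⊆ closure (O ∩ {x | eval x (q₁ * q₂) ≠ 0}) := hD.open_subset_closure_inter hOo
  have hclosed : IsClosed {y | |g y| ^ (N + 1) ≤ |f y|} :=
    isClosed_le (by fun_prop) (by fun_prop)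
  filter_upwards [hOo.mem_nhds hzO] with y hy
  exact closure_minimal onD hclosed (hcl hy)

end Reg
namespace Reg

open Filter Topology in
lemma quot_cont {n : ℕ} {f g : (Fin n → ℝ) → ℝ} (hf : Continuous f) (hg : Continuous g)
    (hZ : ∀ x, f x = 0 → g x = 0) {N0 : ℕ}
    (hN0 : ∀ z, f z = 0 → ∀ᶠ y in 𝓝 z, |g y| ^ N0 ≤ |f y|) (m N : ℕ) (hN : m * N0 < N) :
    Continuous (fun x => g x ^ N / f x ^ m) := by
  rw [continuous_iff_continuousAt]
  intro z
  by_cases hz : f z = 0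
  · have hv : g z ^ N / f z ^ m = 0 := by
      rw [hZ z hz, zero_pow (by omega), zero_div]
    rw [ContinuousAt, hv]
    have hlim : Tendsto (fun y => |g y| ^ (N - m * N0)) (𝓝 z) (𝓝 0) := by
      have : Continuous (fun y => |g y| ^ (N - m * N0)) := by fun_prop
      have h := this.tendsto z
      rw [hZ z hz, abs_zero, zero_pow (by omega)] at h
      exact h
    refine squeeze_zero_norm' ?_ hlim
    filter_upwards [hN0 z hz] with y hy
    rw [Real.norm_eq_abs, abs_div, abs_pow, abs_pow]
    apply div_le_of_le_mul₀ (by positivity) (by positivity)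
    calc |g y| ^ N = |g y| ^ (N - m * N0) * (|g y| ^ N0) ^ m := by
          rw [← pow_mul, ← pow_add]; congr 1; rw [mul_comm N0 m]; omega
      _ ≤ _ := by gcongr
  · exact (hg.continuousAt.pow N).div (hf.continuousAt.pow m) (pow_ne_zero _ hz)

open Filter Topology in
lemma quot_deriv {n : ℕ} {f g : (Fin n → ℝ) → ℝ} (hf : Differentiable ℝ f) (hg : Differentiable ℝ g)
    (hZ : ∀ x, f x = 0 → g x = 0) {N0 : ℕ}
    (hN0 : ∀ z, f z = 0 → ∀ᶠ y in 𝓝 z, |g y| ^ N0 ≤ |f y|) (m N : ℕ) (hN : m * N0 < N) (z) :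
    HasFDerivAt (fun x => g x ^ (N + 1) / f x ^ m)
      ((g z ^ N / f z ^ (m + 1)) • (((N + 1 : ℕ) * f z) • fderiv ℝ g z - (m * g z) • fderiv ℝ f z)) z := by
  by_cases hz : f z = 0
  · have h0 := hZ z hz
    have e : (g z ^ N / f z ^ (m + 1)) = 0 := by simp [hz]
    rw [e, zero_smul, hasFDerivAt_iff_isLittleO]
    have h1 : (fun x => g x - g z) =O[𝓝 z] fun x => x - z := (hg z).hasFDerivAt.isBigO_sub
    have h2 : (fun x => g x ^ N / f x ^ m) =o[𝓝 z] fun _ => (1 : ℝ) := by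
      rw [Asymptotics.isLittleO_one_iff]
      have := (quot_cont hf.continuous hg.continuous hZ hN0 m N hN).tendsto z
      rw [h0, zero_pow (by omega), zero_div] at this
      exact this
    have h3 := h1.norm_right.mul_isLittleO h2
    rw [← Asymptotics.isLittleO_norm_right]
    refine h3.congr (fun x => ?_) (fun x => by simp)
    simp only [h0, zero_apply]
    rw [zero_pow (by omega)]
    simp only [zero_div, sub_zero]
    rw [pow_succ']; ring
  · have h1 : HasDerivAt (fun t : ℝ => t ^ (N+1)) ((N + 1 : ℕ) * g z ^ N) (g z) := by
      simpa using hasDerivAt_pow (N+1) (g z)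
    have h2 : HasDerivAt (fun t : ℝ => t ^ m) (m * f z ^ (m-1)) (f z) := hasDerivAt_pow m (f z)
    have k1 := h1.comp_hasFDerivAt z (hg z).hasFDerivAt
    have k2 := (h2.inv (pow_ne_zero m hz)).comp_hasFDerivAt z (hf z).hasFDerivAt
    have k3 := k1.mul k2
    refine (k3.congr_fderiv ?_)
    ext v
    simp
    rcases m with _ | m
    · simp; field_simp
    · simp
      field_simp
      ring

open Filter Topology in
lemma quot_contDiff {n : ℕ} {f g : (Fin n → ℝ) → ℝ}
    (hZ : ∀ x, f x = 0 → g x = 0) {N0 : ℕ}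
    (hN0 : ∀ z, f z = 0 → ∀ᶠ y in 𝓝 z, |g y| ^ N0 ≤ |f y|) (k : ℕ) :
    ContDiff ℝ k f → ContDiff ℝ k g → ∀ m : ℕ, ∃ M : ℕ, ∀ N ≥ M,
      ContDiff ℝ k (fun x => g x ^ N / f x ^ m) := by
  induction k with
  | zero =>
    intro hf hg m
    refine ⟨m * N0 + 1, fun N hN => ?_⟩
    rw [Nat.cast_zero, contDiff_zero]
    exact quot_cont hf.continuous hg.continuous hZ hN0 m N (by omega)
  | succ k ih =>
    intro hf hg m
    have hf' : ContDiff ℝ k f := hf.of_le (by norm_cast; omega)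
    have hg' : ContDiff ℝ k g := hg.of_le (by norm_cast; omega)
    obtain ⟨M, hM⟩ := ih hf' hg' (m + 1)
    refine ⟨M + m * N0 + 2, fun N hN => ?_⟩
    obtain ⟨N, rfl⟩ : ∃ N', N = N' + 1 := ⟨N - 1, by omega⟩
    have hfd : Differentiable ℝ f := hf.differentiable (by norm_cast; )
    have hgd : Differentiable ℝ g := hg.differentiable (by norm_cast; )
    have hd := quot_deriv hfd hgd hZ hN0 m N (by omega)
    have hf1 : ContDiff ℝ k (fderiv ℝ f) := hf.fderiv_right (by norm_cast)
    have hg1 : ContDiff ℝ k (fderiv ℝ g) := hg.fderiv_right (by norm_cast)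
    rw [show ((k + 1 : ℕ) : WithTop ℕ∞) = (k : WithTop ℕ∞) + 1 by norm_cast,
      contDiff_succ_iff_fderiv]
    refine ⟨fun z => (hd z).differentiableAt, by simp, ?_⟩
    have : fderiv ℝ (fun x => g x ^ (N + 1) / f x ^ m) = _ := funext fun z => (hd z).fderiv
    rw [this]
    refine (hM N (by omega)).smul (ContDiff.sub ?_ ?_)
    · exact (contDiff_const.mul hf').smul hg1
    · exact (contDiff_const.mul hg').smul hf1

end Reg
namespace Reg

/-- Zero set of an ideal of polynomials. -/
def VV {n : ℕ} (J : Ideal (MvPolynomial (Fin n) ℝ)) : Set (Fin n → ℝ) := {x | ∀ F ∈ J, eval x F = 0}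

open Polynomial Filter Topology in
lemma taylor_coeff (a : ℕ) : ∀ (P Q : ℝ[X]) (F : ℝ → ℝ), Continuous F →
    (∀ ε, ε ^ a * Q.eval ε * F ε = P.eval ε) → P.coeff a = Q.coeff 0 * F 0 := by
  induction a with
  | zero =>
    intro P Q F hF h
    have := h 0
    rw [← coeff_zero_eq_eval_zero, ← coeff_zero_eq_eval_zero] at this
    rw [← this]; simp
  | succ a ih =>
    intro P Q F hF h
    have h0 : P.coeff 0 = 0 := by
      rw [coeff_zero_eq_eval_zero, ← h 0]; simp
    have e := divX_mul_X_add P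
    rw [h0, Polynomial.C_0, add_zero] at e
    have hc : P.coeff (a + 1) = P.divX.coeff a := by simp
    rw [hc]
    apply ih _ _ _ hF
    have hd : Dense {ε : ℝ | ε ≠ 0} := dense_compl_singleton 0
    have : (fun ε => ε ^ a * Q.eval ε * F ε) = fun ε => P.divX.eval ε := by
      refine Continuous.ext_on hd (by fun_prop) (by fun_prop) ?_
      intro ε hε
      have h1 := h ε
      rw [← e, Polynomial.eval_mul, Polynomial.eval_X] at h1
      apply mul_right_cancel₀ (b := ε) hε
      simp only
      rw [← h1]; ring
    exact fun ε => congrFun this ε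

/-- Restriction of a regulous function to an irreducible algebraic set. -/
lemma restrict {n : ℕ} {f : (Fin n → ℝ) → ℝ} (hf : Continuous f) {p q : MvPolynomial (Fin n) ℝ}
    (hq : q ≠ 0) (h : ∀ x, eval x q * f x = eval x p) (J : Ideal (MvPolynomial (Fin n) ℝ))
    (hJ : (VV J).Nonempty) :
    ∃ q' p' : MvPolynomial (Fin n) ℝ, q' ∉ J ∧ ∀ x ∈ VV J, eval x q' * f x = eval x p' := by
  classical
  obtain ⟨x0, hx0⟩ := hJ
  obtain ⟨w, hw⟩ : ∃ w, eval w q ≠ 0 := by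
    by_contra hc
    push Not at hc
    exact hq (MvPolynomial.funext fun x => by simpa using hc x)
  let v := w - x0
  let φ : MvPolynomial (Fin n) ℝ →ₐ[ℝ] Polynomial (MvPolynomial (Fin n) ℝ) :=
    MvPolynomial.aeval (fun i => Polynomial.C (X i) + Polynomial.X * Polynomial.C (C (v i)))
  have hφ : ∀ F x ε, ((φ F).map (eval x)).eval ε = eval (x + ε • v) F := by
    intro F x ε
    induction F using MvPolynomial.induction_on with
    | C a =>
      simp only [φ, MvPolynomial.algHom_C, eval_C]
      rw [IsScalarTower.algebraMap_apply ℝ (MvPolynomial (Fin n) ℝ) (Polynomial (MvPolynomial (Fin n) ℝ))]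
      simp [MvPolynomial.algebraMap_eq]
    | add F G hF hG => simp [hF, hG]
    | mul_X F i hF =>
      rw [map_mul, Polynomial.map_mul, Polynomial.eval_mul, hF]
      simp only [φ, aeval_X, Polynomial.map_add, Polynomial.map_mul, Polynomial.map_C,
        Polynomial.map_X, Polynomial.eval_add, Polynomial.eval_mul, Polynomial.eval_C,
        Polynomial.eval_X, eval_X, eval_C, map_mul, Pi.add_apply, Pi.smul_apply, smul_eq_mul]
  have hex : ∃ a, (φ q).coeff a ∉ J := by
    by_contra hc
    push Not at hc
    apply hw
    have : w = x0 + (1 : ℝ) • v := by simp [v]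
    rw [this, ← hφ]
    have : (φ q).map (eval x0) = 0 := by
      ext i
      rw [Polynomial.coeff_map, Polynomial.coeff_zero]
      exact hx0 _ (hc i)
    simp [this]
  let a := Nat.find hex
  refine ⟨(φ q).coeff a, (φ p).coeff a, Nat.find_spec hex, fun x hx => ?_⟩
  have hdvd : Polynomial.X ^ a ∣ (φ q).map (eval x) := by
    rw [Polynomial.X_pow_dvd_iff]
    intro d hd
    rw [Polynomial.coeff_map]
    have := Nat.find_min hex hd
    push Not at this
    exact hx _ this
  obtain ⟨Q, hQ⟩ := hdvd
  have := taylor_coeff a ((φ p).map (eval x)) Q (fun ε => f (x + ε • v)) (by fun_prop) (by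
    intro ε
    rw [hφ, ← h, ← hφ, hQ]
    simp)
  rw [Polynomial.coeff_map] at this
  rw [this]
  have h2 : ((φ q).map (eval x)).coeff a = Q.coeff 0 := by
    rw [hQ, Polynomial.coeff_X_pow_mul']; simp
  rw [Polynomial.coeff_map] at h2
  simp [h2]

/-- Noetherian induction. -/
theorem noeth {n : ℕ} (I : Set ((Fin n → ℝ) → ℝ))
    (hcont : ∀ f ∈ I, Continuous f)
    (hrat : ∀ f ∈ I, ∃ p q : MvPolynomial (Fin n) ℝ, q ≠ 0 ∧ ∀ x, eval x q * f x = eval x p)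
    (h0 : ∃ f, f ∈ I)
    (hsq : ∀ f ∈ I, ∀ g ∈ I, ∃ h ∈ I, ∀ x, h x = 0 → f x = 0 ∧ g x = 0)
    (L2 : ∀ J : Ideal (MvPolynomial (Fin n) ℝ), J.IsPrime → ∃ q, q ∉ J ∧ ∀ q', q' ∉ J →
      ∀ x ∈ VV J, eval x q ≠ 0 → x ∈ closure {y | y ∈ VV J ∧ eval y q' ≠ 0}) :
    ∃ f ∈ I, ∀ x, f x = 0 → ∀ g ∈ I, g x = 0 := by
  have key : ∀ J : Ideal (MvPolynomial (Fin n) ℝ),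
      ∃ f ∈ I, ∀ x ∈ VV J, f x = 0 → ∀ g ∈ I, g x = 0 := by
    intro J
    induction J using IsNoetherian.induction with
    | hgt J ih =>
    obtain ⟨f0, hf0⟩ := h0
    have hsup : ∀ a, a ∉ J → ∃ f ∈ I, ∀ x ∈ VV J, eval x a = 0 → f x = 0 → ∀ g ∈ I, g x = 0 := by
      intro a ha
      have hlt : J < J ⊔ Ideal.span {a} := by
        refine lt_of_le_of_ne le_sup_left fun h => ha ?_
        rw [h]
        exact (le_sup_right : _ ≤ J ⊔ Ideal.span {a}) (Ideal.mem_span_singleton_self a)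
      obtain ⟨f, hf, hfx⟩ := ih _ hlt
      refine ⟨f, hf, fun x hx hax => hfx x ?_⟩
      intro F hF
      obtain ⟨b, hb, c, hc, rfl⟩ := Submodule.mem_sup.1 hF
      obtain ⟨d, rfl⟩ := Ideal.mem_span_singleton'.1 hc
      rw [map_add, map_mul, hx b hb, hax]; simp
    rcases (VV J).eq_empty_or_nonempty with hV | hV
    · exact ⟨f0, hf0, fun x hx => by rw [hV] at hx; exact hx.elim⟩
    have hne : J ≠ ⊤ := by
      rintro rfl
      obtain ⟨x, hx⟩ := hV
      have := hx 1 trivial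
      simp at this
    by_cases hP : Ideal.IsPrime J
    · by_cases hA : ∃ f ∈ I, ∃ q' p', q' ∉ J ∧ p' ∉ J ∧ ∀ x ∈ VV J, eval x q' * f x = eval x p'
      · obtain ⟨f, hf, q', p', hq', hp', hfx⟩ := hA
        obtain ⟨f1, hf1, hf1x⟩ := hsup p' hp'
        obtain ⟨h, hh, hhx⟩ := hsq f hf f1 hf1
        refine ⟨h, hh, fun x hx hx0 => ?_⟩
        obtain ⟨e1, e2⟩ := hhx x hx0
        refine hf1x x hx ?_ e2
        rw [← hfx x hx, e1, mul_zero]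
      · push Not at hA
        obtain ⟨q, hq, hqx⟩ := L2 J hP
        obtain ⟨f1, hf1, hf1x⟩ := hsup q hq
        refine ⟨f1, hf1, fun x hx hx0 => ?_⟩
        by_cases hx1 : eval x q = 0
        · exact hf1x x hx hx1 hx0
        · intro g hg
          obtain ⟨p2, q2, hq2, h2⟩ := hrat g hg
          obtain ⟨q', p', hq', hp'⟩ := restrict (hcont g hg) hq2 h2 J hV
          have hp'J : p' ∈ J := by
            by_contra hc
            obtain ⟨y, hy, hy'⟩ := hA g hg q' p' hq' hc
            exact hy' (hp' y hy)
          have hcl := hqx q' hq' x hx hx1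
          have hclosed : IsClosed {y | g y = 0} := isClosed_eq (hcont g hg) continuous_const
          refine closure_minimal ?_ hclosed hcl
          rintro y ⟨hy, hyq⟩
          have := hp' y hy
          rw [hy p' hp'J] at this
          exact (mul_eq_zero.1 this).resolve_left hyq
    · rw [Ideal.isPrime_iff] at hP
      push Not at hP
      obtain ⟨a, b, hab, ha, hb⟩ := hP hne
      obtain ⟨f1, hf1, hf1x⟩ := hsup a ha
      obtain ⟨f2, hf2, hf2x⟩ := hsup b hb
      obtain ⟨h, hh, hhx⟩ := hsq f1 hf1 f2 hf2
      refine ⟨h, hh, fun x hx hx0 => ?_⟩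
      obtain ⟨e1, e2⟩ := hhx x hx0
      have := hx _ hab
      rw [map_mul] at this
      rcases mul_eq_zero.1 this with h | h
      · exact hf1x x hx h e1
      · exact hf2x x hx h e2
  obtain ⟨f, hf, hfx⟩ := key ⊥
  refine ⟨f, hf, fun x => hfx x ?_⟩
  intro F hF
  rw [Ideal.mem_bot.1 hF, map_zero]

end Reg
namespace Reg

open Polynomial in
/-- Algebraic data of a prime of `A[X]` algebraic over its contraction. -/
lemma alg_data {A : Type} [CommRing A] [IsDomain A] [CharZero A] [Algebra ℚ A] (J : Ideal A[X]) (hJ : J.IsPrime)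
    (hne : ∃ F ∈ J, ∃ i, F.coeff i ∉ J.comap Polynomial.C) :
    ∃ m ∈ J, m.leadingCoeff ∉ J.comap Polynomial.C ∧ derivative m ∉ J ∧
      (∀ F ∈ J, ∃ (e : ℕ) (B R : A[X]), Polynomial.C m.leadingCoeff ^ e * F = m * B + R ∧
        ∀ i, R.coeff i ∈ J.comap Polynomial.C) ∧
      ∀ q' ∉ J, ∃ c ∉ J.comap Polynomial.C, ∃ a : A[X], ∃ j ∈ J, Polynomial.C c = a * q' + j := by
  classical
  set J0 := J.comap (Polynomial.C : A →+* A[X]) with hJ0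
  have hJ0p : J0.IsPrime := Ideal.IsPrime.comap _
  -- choose m of minimal degree
  have hex : ∃ d, ∃ F ∈ J, (∃ i, F.coeff i ∉ J0) ∧ F.natDegree = d := by
    obtain ⟨F, hF, hi⟩ := hne
    exact ⟨_, F, hF, hi, rfl⟩
  obtain ⟨m, hmJ, ⟨i0, hi0⟩, hmd⟩ := Nat.find_spec hex
  have hmin : ∀ F ∈ J, F.natDegree < m.natDegree → ∀ i, F.coeff i ∈ J0 := by
    intro F hF hlt
    by_contra hc
    push Not at hc
    rw [hmd] at hlt
    exact Nat.find_min hex hlt ⟨F, hF, hc, rfl⟩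
  have hmem : ∀ F : A[X], (∀ i, F.coeff i ∈ J0) → F ∈ J := by
    intro F hF
    rw [F.as_sum_range_C_mul_X_pow]
    exact Ideal.sum_mem _ fun i _ => Ideal.mul_mem_right _ _ (hF i)
  have hlc : m.leadingCoeff ∉ J0 := by
    intro hl
    have h1 : m.eraseLead ∈ J := by
      rw [← self_sub_C_mul_X_pow]
      exact J.sub_mem hmJ (Ideal.mul_mem_right _ _ hl)
    rcases Nat.eq_zero_or_pos m.natDegree with h0 | hpos
    · rw [eq_C_of_natDegree_eq_zero h0] at hi0
      rw [Polynomial.coeff_C] at hi0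
      split_ifs at hi0
      · rw [leadingCoeff, h0] at hl; exact hi0 hl
      · exact hi0 J0.zero_mem
    · have h2 : m.eraseLead.natDegree < m.natDegree :=
        lt_of_le_of_lt (eraseLead_natDegree_le m) (by omega)
      have h3 := hmin _ h1 h2 i0
      rw [eraseLead_coeff] at h3
      split_ifs at h3 with hi
      · rw [hi] at hi0; exact hi0 hl
      · exact hi0 h3
  have hm0 : m ≠ 0 := by rintro rfl; simp at hlc
  have hmpos : 0 < m.natDegree := by
    by_contra hc
    have h0 : m.natDegree = 0 := by omega
    apply hlc
    rw [leadingCoeff, h0, hJ0, Ideal.mem_comap, ← eq_C_of_natDegree_eq_zero h0]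
    exact hmJ
  have hred : ∀ F : A[X], ∃ (e : ℕ) (B R : A[X]), Polynomial.C m.leadingCoeff ^ e * F = m * B + R ∧
      R.natDegree < m.natDegree := by
    intro F
    obtain ⟨R, ⟨e, B, h⟩, hd⟩ := pdiv F m hm0
    refine ⟨e, B, R, h, ?_⟩
    by_cases hR : R = 0
    · rw [hR]; simpa using hmpos
    · exact natDegree_lt_natDegree hR hd
  refine ⟨m, hmJ, hlc, ?_, ?_, ?_⟩
  · intro hd
    have h1 := hmin _ hd (natDegree_derivative_lt hmpos.ne') (m.natDegree - 1)
    rw [coeff_derivative, Nat.sub_add_cancel hmpos] at h1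
    apply hlc
    have : ((m.natDegree - 1 : ℕ) : A) + 1 = algebraMap ℚ A m.natDegree := by
      rw [map_natCast]; norm_cast; omega
    rw [this] at h1
    have h2 := J0.mul_mem_right (algebraMap ℚ A (m.natDegree : ℚ)⁻¹) h1
    rw [mul_assoc, ← map_mul, mul_inv_cancel₀ (by positivity), map_one, mul_one] at h2
    exact h2
  · intro F hF
    obtain ⟨e, B, R, h, hd⟩ := hred F
    refine ⟨e, B, R, h, hmin R ?_ hd⟩
    have : R = Polynomial.C m.leadingCoeff ^ e * F - m * B := by rw [h]; ring
    rw [this]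
    exact J.sub_mem (J.mul_mem_left _ hF) (J.mul_mem_right _ hmJ)
  · intro q' hq'
    let J2 := Ideal.span {q'} ⊔ J
    have hq2 : q' ∈ J2 := (le_sup_left : _ ≤ J2) (Ideal.mem_span_singleton_self q')
    have hJ2 : J ≤ J2 := le_sup_right
    have hex2 : ∃ d, ∃ u ∈ J2, u ∉ J ∧ u.natDegree = d := ⟨_, q', hq2, hq', rfl⟩
    obtain ⟨u, hu2, huJ, hud⟩ := Nat.find_spec hex2
    have umin : ∀ F ∈ J2, F.natDegree < u.natDegree → F ∈ J := by
      intro F hF hlt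
      by_contra hc
      rw [hud] at hlt
      exact Nat.find_min hex2 hlt ⟨F, hF, hc, rfl⟩
    have hdeg0 : u.natDegree = 0 := by
      by_contra hpos
      have hul : u.leadingCoeff ∉ J0 := by
        intro hl
        have hl' : Polynomial.C u.leadingCoeff * Polynomial.X ^ u.natDegree ∈ J :=
          Ideal.mul_mem_right _ _ hl
        have h1 : u.eraseLead ∈ J2 := by
          rw [← self_sub_C_mul_X_pow]
          exact J2.sub_mem hu2 (hJ2 hl')
        have h2 : u.eraseLead.natDegree < u.natDegree :=
          lt_of_le_of_lt (eraseLead_natDegree_le u) (by omega)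
        have h3 := umin _ h1 h2
        apply huJ
        rw [← eraseLead_add_C_mul_X_pow u]
        exact J.add_mem h3 hl'
      have hu0 : u ≠ 0 := by rintro rfl; simp at hul
      -- deg u < deg m
      have hum : u.natDegree < m.natDegree := by
        obtain ⟨e, B, R, h, hd⟩ := hred u
        have hR : R = Polynomial.C m.leadingCoeff ^ e * u - m * B := by rw [h]; ring
        by_contra hc
        have hRJ : R ∈ J := by
          apply umin _ _ (by omega)
          rw [hR]
          exact J2.sub_mem (J2.mul_mem_left _ hu2) (J2.mul_mem_right _ (hJ2 hmJ))
        have : Polynomial.C m.leadingCoeff ^ e * u ∈ J := by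
          rw [h]; exact J.add_mem (J.mul_mem_right _ hmJ) hRJ
        rcases hJ.mem_or_mem this with h4 | h4
        · exact hlc (hJ.mem_of_pow_mem _ h4)
        · exact huJ h4
      obtain ⟨R, ⟨e, B, h⟩, hd⟩ := pdiv m u hu0
      have hRJ : R ∈ J := by
        by_cases hR0 : R = 0
        · rw [hR0]; exact J.zero_mem
        apply umin _ _ (natDegree_lt_natDegree hR0 hd)
        have hR : R = Polynomial.C u.leadingCoeff ^ e * m - u * B := by rw [h]; ring
        rw [hR]
        exact J2.sub_mem (J2.mul_mem_left _ (hJ2 hmJ)) (J2.mul_mem_right _ hu2)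
      have huB : u * B = Polynomial.C u.leadingCoeff ^ e * m - R := by rw [h]; ring
      have hBJ : B ∈ J := by
        have : u * B ∈ J := by
          rw [huB]; exact J.sub_mem (J.mul_mem_left _ hmJ) hRJ
        exact (hJ.mem_or_mem this).resolve_left huJ
      have hcne : u.leadingCoeff ^ e ≠ 0 := pow_ne_zero _ (leadingCoeff_ne_zero.2 hu0)
      have hdegm : (Polynomial.C u.leadingCoeff ^ e * m).degree = m.degree := by
        rw [← Polynomial.C_pow, degree_C_mul hcne]
      have hlt : R.degree < (Polynomial.C u.leadingCoeff ^ e * m).degree := by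
        rw [hdegm]
        refine hd.trans ?_
        exact degree_lt_degree hum
      have hl : (u * B).leadingCoeff = u.leadingCoeff ^ e * m.leadingCoeff := by
        rw [huB, leadingCoeff_sub_of_degree_lt hlt, leadingCoeff_mul, ← Polynomial.C_pow,
          leadingCoeff_C]
      have hdB : (u * B).degree = m.degree := by
        rw [huB, degree_sub_eq_left_of_degree_lt hlt, hdegm]
      have hB0 : B ≠ 0 := by
        rintro rfl
        rw [mul_zero, degree_zero] at hdB
        exact hm0 (degree_eq_bot.1 hdB.symm)
      have hdB' : u.natDegree + B.natDegree = m.natDegree := by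
        rw [← natDegree_mul hu0 hB0]
        exact natDegree_eq_of_degree_eq hdB
      have hBl := hmin B hBJ (by omega) B.natDegree
      have h5 : u.leadingCoeff ^ e * m.leadingCoeff ∈ J0 := by
        rw [← hl, leadingCoeff_mul]
        exact J0.mul_mem_left _ hBl
      rcases hJ0p.mem_or_mem h5 with h6 | h6
      · exact hul (hJ0p.mem_of_pow_mem _ h6)
      · exact hlc h6
    have huC := eq_C_of_natDegree_eq_zero hdeg0
    refine ⟨u.coeff 0, ?_, ?_⟩
    · intro hc
      rw [hJ0, Ideal.mem_comap, ← huC] at hc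
      exact huJ hc
    · rw [← huC]
      obtain ⟨b, hb, j, hj, hbj⟩ := Submodule.mem_sup.1 hu2
      obtain ⟨a, rfl⟩ := Ideal.mem_span_singleton'.1 hb
      exact ⟨a, j, hj, hbj.symm⟩

end Reg
namespace Reg

open Polynomial in
/-- Evaluation of a polynomial with polynomial coefficients. -/
noncomputable def EE {n : ℕ} (y : Fin n → ℝ) (s : ℝ) : (MvPolynomial (Fin n) ℝ)[X] →+* ℝ :=
  (Polynomial.evalRingHom s).comp (Polynomial.mapRingHom (eval y))

lemma EE_apply {n : ℕ} (y : Fin n → ℝ) (s : ℝ) (F) :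
    EE y s F = Polynomial.eval s (Polynomial.map (eval y) F) := rfl

lemma EE_C {n : ℕ} (y : Fin n → ℝ) (s : ℝ) (F) : EE y s (Polynomial.C F) = eval y F := by
  simp [EE_apply]

lemma EE_coeff_zero {n : ℕ} (y : Fin n → ℝ) (s : ℝ) (F : Polynomial (MvPolynomial (Fin n) ℝ))
    (h : ∀ i, eval y (F.coeff i) = 0) : EE y s F = 0 := by
  have : Polynomial.map (eval y) F = 0 := by
    ext i; rw [Polynomial.coeff_map, h i, Polynomial.coeff_zero]
  rw [EE_apply, this, Polynomial.eval_zero]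

lemma EE_finSucc {n : ℕ} (y : Fin n → ℝ) (s : ℝ) (F : MvPolynomial (Fin (n+1)) ℝ) :
    EE y s (finSuccEquiv ℝ n F) = eval (Fin.cons s y : Fin (n+1) → ℝ) F := by
  rw [EE_apply, eval_eq_eval_mv_eval']

lemma EE_cont {n : ℕ} (s : ℝ) (F : Polynomial (MvPolynomial (Fin n) ℝ)) :
    Continuous fun y => EE y s F := by
  obtain ⟨G, rfl⟩ := (finSuccEquiv ℝ n).surjective F
  simp only [EE_finSucc]
  have h := MvPolynomial.continuous_eval G
  refine h.comp ?_
  exact continuous_const.finCons continuous_id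

open Filter Topology in
lemma root_persist {n : ℕ} (m : Polynomial (MvPolynomial (Fin n) ℝ)) (y : Fin n → ℝ) (s : ℝ)
    (h0 : EE y s m = 0) (h1 : EE y s (Polynomial.derivative m) ≠ 0) (δ : ℝ) (hδ : 0 < δ) :
    ∀ᶠ y' in 𝓝 y, ∃ s', dist s' s < δ ∧ EE y' s' m = 0 := by
  have hd : HasDerivAt (fun t => EE y t m) (EE y s (Polynomial.derivative m)) s := by
    simp only [EE_apply]
    rw [← Polynomial.derivative_map]
    exact Polynomial.hasDerivAt _ _
  have hball : Metric.ball s δ ∈ 𝓝 s := Metric.ball_mem_nhds s hδ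
  obtain ⟨s1, hs1, hn1⟩ : ∃ s1 ∈ Metric.ball s δ, EE y s1 m < 0 := by
    by_contra hc
    push Not at hc
    apply h1
    have : IsLocalMin (fun t => EE y t m) s := by
      filter_upwards [hball] with t ht
      rw [h0]; exact hc t ht
    exact this.hasDerivAt_eq_zero hd
  obtain ⟨s2, hs2, hn2⟩ : ∃ s1 ∈ Metric.ball s δ, 0 < EE y s1 m := by
    by_contra hc
    push Not at hc
    apply h1
    have : IsLocalMax (fun t => EE y t m) s := by
      filter_upwards [hball] with t ht
      rw [h0]; exact hc t ht
    exact this.hasDerivAt_eq_zero hd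
  filter_upwards [(EE_cont s1 m).tendsto y |>.eventually_lt_const hn1,
    (EE_cont s2 m).tendsto y |>.eventually_const_lt hn2] with y' e1 e2
  have hpc : IsPreconnected (Metric.ball s δ) := (convex_ball s δ).isPreconnected
  have hco : ContinuousOn (fun t => EE y' t m) (Metric.ball s δ) := by
    simp only [EE_apply]
    fun_prop
  obtain ⟨s', hs', hz⟩ := hpc.intermediate_value hs1 hs2 hco ⟨e1.le, e2.le⟩
  exact ⟨s', hs', hz⟩

open Filter Topology in
lemma L2_step {n : ℕ}
    (ih : ∀ J : Ideal (MvPolynomial (Fin n) ℝ), J.IsPrime → ∃ q, q ∉ J ∧ ∀ q', q' ∉ J →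
      ∀ x ∈ VV J, eval x q ≠ 0 → x ∈ closure {y | y ∈ VV J ∧ eval y q' ≠ 0})
    (J : Ideal (Polynomial (MvPolynomial (Fin n) ℝ))) (hJ : J.IsPrime) :
    ∃ q, q ∉ J ∧ ∀ q', q' ∉ J → ∀ y s, (∀ F ∈ J, EE y s F = 0) → EE y s q ≠ 0 →
      ∀ δ > 0, ∃ y' s', dist y' y < δ ∧ dist s' s < δ ∧ (∀ F ∈ J, EE y' s' F = 0) ∧
        EE y' s' q' ≠ 0 := by
  have hJ0p : (J.comap (Polynomial.C)).IsPrime := Ideal.IsPrime.comap _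
  obtain ⟨q0, hq0, hq0x⟩ := ih _ hJ0p
  have hVV : ∀ y s, (∀ F ∈ J, EE y s F = 0) → y ∈ VV (J.comap Polynomial.C) := by
    intro y s h F hF
    have := h _ hF
    rwa [EE_C] at this
  by_cases hne : ∃ F ∈ J, ∃ i, F.coeff i ∉ J.comap Polynomial.C
  · obtain ⟨m, hm, hl, hd, hdiv, hc⟩ := alg_data J hJ hne
    refine ⟨Polynomial.C (q0 * m.leadingCoeff) * Polynomial.derivative m, ?_, ?_⟩
    · intro h
      rcases hJ.mem_or_mem h with h | h
      · rw [Polynomial.C_mul] at h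
        rcases hJ.mem_or_mem h with h | h
        · exact hq0 h
        · exact hl h
      · exact hd h
    · intro q' hq' y s hys hq δ hδ
      rw [map_mul, EE_C, map_mul] at hq
      have hqa := left_ne_zero_of_mul (left_ne_zero_of_mul hq)
      have hqb := right_ne_zero_of_mul (left_ne_zero_of_mul hq)
      have hqc := right_ne_zero_of_mul hq
      obtain ⟨c, hc, a, j, hj, hcaj⟩ := hc q' hq'
      have hcl := hq0x c hc y (hVV y s hys) hqa
      have e1 := root_persist m y s (hys m hm) hqc δ hδ
      have e2 : ∀ᶠ y' in 𝓝 y, eval y' m.leadingCoeff ≠ 0 :=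
        (MvPolynomial.continuous_eval m.leadingCoeff).continuousAt.eventually_ne hqb
      have e3 : ∀ᶠ y' in 𝓝 y, dist y' y < δ := Metric.ball_mem_nhds y hδ
      obtain ⟨y', ⟨⟨hy'V, hy'c⟩, ⟨s', hs', hms'⟩, hl', hdy⟩⟩ :=
        ((mem_closure_iff_frequently.1 hcl).and_eventually (e1.and (e2.and e3))).exists
      have hall : ∀ F ∈ J, EE y' s' F = 0 := by
        intro F hF
        obtain ⟨e, B, R, h, hR⟩ := hdiv F hF
        have h' := congrArg (EE y' s') h
        rw [map_mul, map_add, map_mul, hms', map_pow, EE_C,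
          EE_coeff_zero y' s' R (fun i => hy'V _ (hR i)), zero_mul, add_zero] at h'
        exact (mul_eq_zero.1 h').resolve_left (pow_ne_zero _ hl')
      refine ⟨y', s', hdy, hs', hall, ?_⟩
      intro h0
      apply hy'c
      have h' := congrArg (EE y' s') hcaj
      rw [EE_C, map_add, map_mul, h0, hall j hj] at h'
      rw [h']; ring
  · push Not at hne
    refine ⟨Polynomial.C q0, hq0, ?_⟩
    intro q' hq' y s hys hq δ hδ
    rw [EE_C] at hq
    obtain ⟨i, hi⟩ : ∃ i, q'.coeff i ∉ J.comap Polynomial.C := by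
      by_contra hc
      push Not at hc
      apply hq'
      rw [q'.as_sum_range_C_mul_X_pow]
      exact Ideal.sum_mem _ fun i _ => Ideal.mul_mem_right _ _ (hc i)
    have hcl := hq0x _ hi y (hVV y s hys) hq
    have e3 : ∀ᶠ y' in 𝓝 y, dist y' y < δ := Metric.ball_mem_nhds y hδ
    obtain ⟨y', ⟨hy'V, hy'c⟩, hdy⟩ :=
      ((mem_closure_iff_frequently.1 hcl).and_eventually e3).exists
    have hpne : Polynomial.map (eval y') q' ≠ 0 := by
      intro h
      apply hy'c
      rw [← Polynomial.coeff_map, h, Polynomial.coeff_zero]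
    have hfin : {t | (Polynomial.map (eval y') q').IsRoot t}.Finite :=
      Polynomial.finite_setOfPred_isRoot hpne
    have hinf : (Metric.ball s δ).Infinite := by
      rw [Real.ball_eq_Ioo]; exact Set.Ioo_infinite (by linarith)
    obtain ⟨s', hs', hns'⟩ := hinf.exists_notMem_finite hfin
    refine ⟨y', s', hdy, hs', ?_, hns'⟩
    intro F hF
    exact EE_coeff_zero _ _ _ fun i => hy'V _ (hne F hF i)

theorem L2 (n : ℕ) : ∀ J : Ideal (MvPolynomial (Fin n) ℝ), J.IsPrime → ∃ q, q ∉ J ∧ ∀ q', q' ∉ J →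
      ∀ x ∈ VV J, eval x q ≠ 0 → x ∈ closure {y | y ∈ VV J ∧ eval y q' ≠ 0} := by
  induction n with
  | zero =>
    intro J hJ
    refine ⟨1, fun h => hJ.ne_top ((Ideal.eq_top_iff_one J).2 h), ?_⟩
    intro q' hq' x hx _
    apply subset_closure
    refine ⟨hx, fun h0 => hq' ?_⟩
    have : q' = 0 := by
      apply MvPolynomial.funext
      intro y
      rw [Subsingleton.elim y x, h0, map_zero]
    rw [this]; exact J.zero_mem
  | succ n ih =>
    intro J hJ
    let φ := finSuccEquiv ℝ n
    have hJ' : (J.comap φ.symm.toRingHom).IsPrime := Ideal.IsPrime.comap _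
    obtain ⟨q, hq, hqx⟩ := L2_step ih (J.comap φ.symm.toRingHom) hJ'
    have hcons : ∀ x : Fin (n+1) → ℝ, (Fin.cons (x 0) (Fin.tail x) : Fin (n+1) → ℝ) = x :=
      fun x => Fin.cons_self_tail x
    refine ⟨φ.symm q, hq, ?_⟩
    intro q' hq' x hx hxq
    have hE : ∀ F y s, EE y s F = eval (Fin.cons s y : Fin (n+1) → ℝ) (φ.symm F) := by
      intro F y s
      rw [← EE_finSucc]; simp [φ]
    rw [Metric.mem_closure_iff]
    intro δ hδ
    obtain ⟨y', s', hy', hs', hV, hne⟩ := hqx (φ q') (by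
        intro h; apply hq'
        have : φ.symm (φ q') ∈ J := h
        simpa using this) (Fin.tail x) (x 0) (by
        intro F hF
        rw [hE, hcons]; exact hx _ hF) (by rw [hE, hcons]; exact hxq) δ hδ
    refine ⟨Fin.cons s' y', ⟨?_, ?_⟩, ?_⟩
    · intro F hF
      rw [← EE_finSucc]
      apply hV
      change φ.symm (φ F) ∈ J
      simpa using hF
    · rw [← EE_finSucc]; exact hne
    · rw [dist_comm, dist_pi_lt_iff hδ]
      intro i
      refine Fin.cases ?_ (fun i => ?_) i
      · simpa using hs'
      · rw [Fin.cons_succ]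
        exact lt_of_le_of_lt (dist_le_pi_dist y' (Fin.tail x) i) hy'

end Reg
/-- **Regulous functions, Théorème `thmradprinc`**: the ring `R^k(ℝⁿ)` is radically
principal: every ideal `I` contains a function `f` with `Z(f) = Z(I)` and
`Rad (f) = Rad I`. -/
theorem regulous_radically_principal (n k : ℕ) (I : Ideal (regulousRing n k)) :
    ∃ f ∈ I,
      ({x : Fin n → ℝ | (f : (Fin n → ℝ) → ℝ) x = 0} =
        ⋂ g ∈ I, {x : Fin n → ℝ | (g : (Fin n → ℝ) → ℝ) x = 0}) ∧
      (Ideal.span {f}).radical = I.radical := by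
  obtain ⟨f0, ⟨f, hfI, rfl⟩, hfx⟩ := Reg.noeth
    ((fun g : regulousRing n k => (g : (Fin n → ℝ) → ℝ)) '' (I : Set (regulousRing n k)))
    (by rintro _ ⟨g, hg, rfl⟩; exact g.2.1.continuous)
    (by rintro _ ⟨g, hg, rfl⟩; exact g.2.2)
    ⟨_, 0, I.zero_mem, rfl⟩
    (by
      rintro _ ⟨g, hg, rfl⟩ _ ⟨h, hh, rfl⟩
      refine ⟨_, ⟨g * g + h * h, I.add_mem (I.mul_mem_left _ hg) (I.mul_mem_left _ hh), rfl⟩, ?_⟩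
      intro x hx
      have hx' : (g : (Fin n → ℝ) → ℝ) x * (g : (Fin n → ℝ) → ℝ) x
        + (h : (Fin n → ℝ) → ℝ) x * (h : (Fin n → ℝ) → ℝ) x = 0 := hx
      constructor <;> nlinarith [mul_self_nonneg ((g : (Fin n → ℝ) → ℝ) x),
        mul_self_nonneg ((h : (Fin n → ℝ) → ℝ) x)])
    (Reg.L2 n)
  have hZ : ∀ g ∈ I, ∀ x, (f : (Fin n → ℝ) → ℝ) x = 0 → (g : (Fin n → ℝ) → ℝ) x = 0 :=
    fun g hg x hx => hfx x hx _ ⟨g, hg, rfl⟩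
  refine ⟨f, hfI, ?_, ?_⟩
  · ext x
    simp only [Set.mem_iInter, Set.mem_ofPred_eq]
    exact ⟨fun h g hg => hZ g hg x h, fun h => h f hfI⟩
  · apply le_antisymm
    · apply Ideal.radical_mono
      rw [Ideal.span_singleton_le_iff_mem]; exact hfI
    · rw [Ideal.radical_le_radical_iff]
      intro g hg
      obtain ⟨hfc, p₁, q₁, hq₁, h₁⟩ := f.2
      obtain ⟨hgc, p₂, q₂, hq₂, h₂⟩ := g.2
      have hZ' := hZ g hg
      by_cases hp : p₁ = 0
      · -- f = 0
        have hf0 : ∀ x, (f : (Fin n → ℝ) → ℝ) x = 0 := by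
          have hd := Reg.dense_ne q₁ hq₁
          have : (f : (Fin n → ℝ) → ℝ) = fun _ => 0 := by
            refine Continuous.ext_on hd hfc.continuous continuous_const ?_
            intro x hx
            have := h₁ x
            rw [hp, map_zero] at this
            exact (mul_eq_zero.1 this).resolve_left hx
          exact fun x => congrFun this x
        have : g = 0 := by
          apply Subtype.ext
          funext x
          exact hZ' x (hf0 x)
        rw [this]; exact Ideal.zero_mem _
      obtain ⟨N0, hN0⟩ := Reg.loj hfc.continuous hgc.continuous hq₁ hq₂ h₁ h₂ hZ'
      obtain ⟨M, hM⟩ := Reg.quot_contDiff hZ' hN0 k hfc hgc 1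
      have hh := hM (M + 1) (by omega)
      simp only [pow_one] at hh
      have key : ∀ x, (g : (Fin n → ℝ) → ℝ) x ^ (M + 1) =
          (g : (Fin n → ℝ) → ℝ) x ^ (M + 1) / (f : (Fin n → ℝ) → ℝ) x * (f : (Fin n → ℝ) → ℝ) x := by
        intro x
        by_cases hx : (f : (Fin n → ℝ) → ℝ) x = 0
        · rw [hZ' x hx, hx]; simp
        · rw [div_mul_cancel₀ _ hx]
      have hreg : IsRegulous n k
          (fun x => (g : (Fin n → ℝ) → ℝ) x ^ (M + 1) / (f : (Fin n → ℝ) → ℝ) x) := by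
        refine ⟨hh, p₂ ^ (M + 1) * q₁, q₂ ^ (M + 1) * p₁, mul_ne_zero (pow_ne_zero _ hq₂) hp, ?_⟩
        intro x
        simp only [map_mul, map_pow]
        have hk := key x
        rw [← h₁ x, ← h₂ x, mul_pow]
        linear_combination (-(eval x q₂ ^ (M + 1) * eval x q₁)) * hk
      refine ⟨M + 1, ?_⟩
      rw [Ideal.mem_span_singleton']
      refine ⟨⟨_, hreg⟩, ?_⟩
      apply Subtype.ext
      funext x
      exact (key x).symm
end

section
/- Let n, k be natural numbers and let f, g be k-regulous functions on ℝⁿ. Then f belongs to the radical of the principal ideal generated by g in R^k(ℝⁿ) if and only if Z(g) ⊆ Z(f). -/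
open MvPolynomial

open TensorProduct

theorem exists_dual_derivations {ι : Type} [Fintype ι] [DecidableEq ι] {K : Type} [Field K]
    [Algebra ℝ K] [Algebra.EssFiniteType ℝ K] (F : ι → K) (h : AlgebraicIndependent ℝ F) :
    ∃ D : ι → Derivation ℝ K K, ∀ i j, D i (F j) = if i = j then 1 else 0 := by
  let B := MvPolynomial ι ℝ
  let : Algebra B K := (aeval F : B →ₐ[ℝ] K).toRingHom.toAlgebra
  have hmap : ∀ b : B, algebraMap B K b = aeval F b := fun b => rfl
  have : IsScalarTower ℝ B K := IsScalarTower.of_algebraMap_eq (fun r => by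
    rw [hmap]; simp [B])
  have hinj : Function.Injective (algebraMap B K) := h
  have : FaithfulSMul B K := (faithfulSMul_iff_algebraMap_injective B K).2 hinj
  let Q := FractionRing B
  let : Algebra Q K := FractionRing.liftAlgebra B K
  have : IsScalarTower B Q K := inferInstance
  have : IsScalarTower ℝ Q K := IsScalarTower.of_algebraMap_eq (fun r => by
    rw [IsScalarTower.algebraMap_apply ℝ B K, IsScalarTower.algebraMap_apply ℝ B Q,
      ← IsScalarTower.algebraMap_apply B Q K])
  have : Algebra.EssFiniteType Q K := Algebra.EssFiniteType.of_comp ℝ Q K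
  have : CharZero Q := charZero_of_injective_algebraMap (algebraMap ℝ Q).injective
  have : Algebra.FormallySmooth Q K := inferInstance
  have : Algebra.FormallySmooth B Q := .of_isLocalization (nonZeroDivisors B)
  have : Algebra.FormallySmooth B K := .comp B Q K
  have hinjK : Function.Injective (KaehlerDifferential.mapBaseChange ℝ B K) := by
    rw [injective_iff_map_eq_zero]
    intro x hx
    obtain ⟨x, rfl⟩ := (Algebra.H1Cotangent.exact_δ_mapBaseChange ℝ B K x).mp hx
    rw [Subsingleton.elim x 0, map_zero]
  obtain ⟨L, hL⟩ := LinearMap.exists_leftInverse_of_injective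
    (KaehlerDifferential.mapBaseChange ℝ B K) (LinearMap.ker_eq_bot.2 hinjK)
  let d : ι → Derivation ℝ B K := fun i => MvPolynomial.mkDerivation ℝ (fun j => if i = j then 1 else 0)
  let l : ι → (K ⊗[B] Ω[B⁄ℝ] →ₗ[K] K) := fun i =>
    (d i).liftKaehlerDifferential.liftBaseChange K
  refine ⟨fun i => ((l i) ∘ₗ L).compDer (KaehlerDifferential.D ℝ K), fun i j => ?_⟩
  have h1 : KaehlerDifferential.D ℝ K (F j)
      = KaehlerDifferential.mapBaseChange ℝ B K (1 ⊗ₜ KaehlerDifferential.D ℝ B (X j)) := by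
    simp [hmap, B]
  have h2 : L (KaehlerDifferential.mapBaseChange ℝ B K (1 ⊗ₜ KaehlerDifferential.D ℝ B (X j)))
     = 1 ⊗ₜ KaehlerDifferential.D ℝ B (X j) := by
    exact LinearMap.congr_fun hL _
  have h3 : ((l i) ∘ₗ L).compDer (KaehlerDifferential.D ℝ K) (F j) 
    = l i (L (KaehlerDifferential.D ℝ K (F j))) := rfl
  rw [h3, h1, h2]
  simp [l, d, B, MvPolynomial.mkDerivation_X]

theorem homogenize {ι σ : Type} (p : ι → MvPolynomial σ ℝ) (q : MvPolynomial σ ℝ)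
    (R : MvPolynomial ι ℝ) :
    ∃ (N : ℕ) (h : MvPolynomial σ ℝ), ∀ (L : Type) [Field L] [Algebra ℝ L]
      (φ : MvPolynomial σ ℝ →ₐ[ℝ] L), φ q ≠ 0 →
      φ h = φ q ^ N * aeval (fun i => φ (p i) / φ q) R := by
  induction R using MvPolynomial.induction_on with
  | C a =>
    refine ⟨0, C a, fun L _ _ φ _ => ?_⟩
    simp [← MvPolynomial.algebraMap_eq]
  | add R₁ R₂ h₁ h₂ =>
    obtain ⟨N₁, h₁, H₁⟩ := h₁
    obtain ⟨N₂, h₂, H₂⟩ := h₂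
    refine ⟨N₁ + N₂, q ^ N₂ * h₁ + q ^ N₁ * h₂, fun L _ _ φ hq => ?_⟩
    rw [map_add, map_mul, map_mul, map_pow, map_pow, H₁ L φ hq, H₂ L φ hq, map_add]
    ring
  | mul_X R i h =>
    obtain ⟨N, h, H⟩ := h
    refine ⟨N + 1, h * p i, fun L _ _ φ hq => ?_⟩
    rw [map_mul, map_mul, H L φ hq, aeval_X]
    have h1 : φ (p i) = φ q * (φ (p i) / φ q) := by field_simp
    generalize aeval (fun i => φ (p i) / φ q) R = y
    rw [pow_succ]
    linear_combination (φ q ^ N * y) * h1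

theorem derivation_chain {n : ℕ} {K : Type} [Field K] [Algebra ℝ K]
    (φ : MvPolynomial (Fin n) ℝ →ₐ[ℝ] K) (D : Derivation ℝ K K) (a : MvPolynomial (Fin n) ℝ) :
    D (φ a) = ∑ k, D (φ (X k)) * φ (pderiv k a) := by
  induction a using MvPolynomial.induction_on with
  | C a => simp [← MvPolynomial.algebraMap_eq]
  | add a b ha hb => simp [ha, hb, mul_add, Finset.sum_add_distrib]
  | mul_X a i h =>
    simp only [map_mul, Derivation.leibniz, h, smul_eq_mul, pderiv_X, map_add]
    simp only [mul_add, Finset.sum_add_distrib, Pi.single_apply]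
    have h1 : ∑ x, D (φ (X x)) * (φ a * φ (if i = x then 1 else 0)) = φ a * D (φ (X i)) := by
      rw [Finset.sum_eq_single i (by intro b _ hb; simp [hb.symm]) (by simp)]
      simp [mul_comm]
    simp only [h1, Finset.mul_sum]
    congr 1
    · exact Finset.sum_congr rfl fun _ _ => by ring

theorem det_ne_of_minors {ι κ K : Type} [Fintype ι] [DecidableEq ι] [Fintype κ] [Field K]
    (N : ι → κ → K) (V : ι → κ → K) (c : K) (hc : c ≠ 0)
    (h : ∀ i j, ∑ k, N i k * V j k = if i = j then c else 0)
    (hm : ∀ e : ι → κ, (Matrix.of fun i j => V j (e i)).det = 0) : False := by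
  classical
  have h1 : (Matrix.of fun i j => ∑ k, N i k * V j k).det = 0 := by
    have := (Matrix.detRowAlternating (n := ι) (R := K)).toMultilinearMap.map_sum
      (fun i k => (fun j => N i k * V j k))
    have e1 : (Matrix.of fun i j => ∑ k, N i k * V j k).det =
      (Matrix.detRowAlternating (n := ι) (R := K)).toMultilinearMap
        (fun i => ∑ k, (fun j => N i k * V j k)) := by
      show Matrix.det _ = Matrix.det _
      congr 1
      ext i j
      simp
    rw [e1, this]
    refine Finset.sum_eq_zero fun e _ => ?_
    have := (Matrix.detRowAlternating (n := ι) (R := K)).toMultilinearMap.map_smul_univ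
      (fun i => N i (e i)) (fun i j => V j (e i))
    refine Eq.trans this ?_
    have h3 := hm e
    refine Eq.trans (congrArg _ h3) (smul_zero _)
  have h2 : (Matrix.of fun i j => ∑ k, N i k * V j k) = c • (1 : Matrix ι ι K) := by
    ext i j
    simp [h, Matrix.one_apply]
  rw [h2, Matrix.det_smul, Matrix.det_one, mul_one] at h1
  exact pow_ne_zero _ hc h1

/-- scaled gradient of `p / q` -/
noncomputable def sgrad {n : ℕ} (p q : MvPolynomial (Fin n) ℝ) (j : Fin n) :
    MvPolynomial (Fin n) ℝ := q * pderiv j p - p * pderiv j q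

theorem field_aux1 {K : Type} [Field K] (a b : K) (hb : b ≠ 0) : a = b * (a / b) := by field_simp

theorem field_aux2 {K : Type} [Field K] (a b d e : K) (hb : b ≠ 0) :
    b * (b * d + a / b * e) - a * e = b ^ 2 * d := by field_simp; ring

theorem sard_prime {n : ℕ} {ι : Type} [Fintype ι] [DecidableEq ι]
    (p : ι → MvPolynomial (Fin n) ℝ)
    (q : MvPolynomial (Fin n) ℝ) (P : Ideal (MvPolynomial (Fin n) ℝ)) [P.IsPrime] (hq : q ∉ P)
    (hm : ∀ e : ι → Fin n, (Matrix.of fun i j => sgrad (p j) q (e i)).det ∈ P) :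
    ∃ R : MvPolynomial ι ℝ, R ≠ 0 ∧ ∀ x : Fin n → ℝ, eval x q ≠ 0 → (∀ a ∈ P, eval x a = 0) →
      eval (fun i => eval x (p i) / eval x q) R = 0 := by
  let A := MvPolynomial (Fin n) ℝ ⧸ P
  let K := FractionRing A
  let φ : MvPolynomial (Fin n) ℝ →ₐ[ℝ] K :=
    (IsScalarTower.toAlgHom ℝ A K).comp (Ideal.Quotient.mkₐ ℝ P)
  have hφ : ∀ a, φ a = 0 ↔ a ∈ P := by
    intro a
    show algebraMap A K (Ideal.Quotient.mk P a) = 0 ↔ _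
    rw [map_eq_zero_iff _ (IsFractionRing.injective A K), Ideal.Quotient.eq_zero_iff_mem]
  have hφq : φ q ≠ 0 := fun h => hq ((hφ q).1 h)
  have : Algebra.EssFiniteType A K := Algebra.EssFiniteType.of_isLocalization K (nonZeroDivisors A)
  have : Algebra.EssFiniteType ℝ K := Algebra.EssFiniteType.comp ℝ A K
  have key : ¬ AlgebraicIndependent ℝ (fun i => φ (p i) / φ q) := by
    intro hind
    obtain ⟨D, hD⟩ := exists_dual_derivations _ hind
    refine det_ne_of_minors (fun i k => D i (φ (X k))) (fun j k => φ (sgrad (p j) q k))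
      (φ q ^ 2) (pow_ne_zero _ hφq) ?_ ?_
    · intro i j
      have h1 : D i (φ (p j)) = φ q * D i (φ (p j) / φ q) + φ (p j) / φ q * D i (φ q) := by
        have : φ (p j) = φ q * (φ (p j) / φ q) := field_aux1 _ _ hφq
        conv_lhs => rw [this, Derivation.leibniz]
        simp
      have h2 : ∑ k, D i (φ (X k)) * φ (sgrad (p j) q k)
          = φ q * D i (φ (p j)) - φ (p j) * D i (φ q) := by
        rw [derivation_chain φ (D i) (p j), derivation_chain φ (D i) q, Finset.mul_sum,
          Finset.mul_sum, ← Finset.sum_sub_distrib]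
        refine Finset.sum_congr rfl fun k _ => ?_
        simp only [sgrad, map_sub, map_mul]
        ring
      rw [h2, h1, hD, field_aux2 _ _ _ _ hφq]
      split_ifs <;> simp
    · intro e
      have := (hφ _).2 (hm e)
      rw [← this, AlgHom.map_det]
      rfl
  rw [algebraicIndependent_iff] at key
  push Not at key
  obtain ⟨R, hR, hR0⟩ := key
  refine ⟨R, hR0, fun x hx hP => ?_⟩
  obtain ⟨N, h, H⟩ := homogenize p q R
  have h1 := H K φ hφq
  rw [hR, mul_zero] at h1
  have h2 := hP h ((hφ h).1 h1)
  have h3 := H ℝ (aeval x) (by simpa [aeval_eq_eval] using hx)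
  simp only [aeval_eq_eval] at h3
  rw [h2] at h3
  exact (mul_eq_zero.1 h3.symm).resolve_left (pow_ne_zero _ hx)

theorem sard {n : ℕ} {ι : Type} [Fintype ι] (p : ι → MvPolynomial (Fin n) ℝ)
    (q : MvPolynomial (Fin n) ℝ) :
    ∃ R : MvPolynomial ι ℝ, R ≠ 0 ∧ ∀ x : Fin n → ℝ, eval x q ≠ 0 →
      (∃ c : ι → ℝ, c ≠ 0 ∧ ∀ j, ∑ i, c i * eval x (sgrad (p i) q j) = 0) →
      eval (fun i => eval x (p i) / eval x q) R = 0 := by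
  classical
  let I : Ideal (MvPolynomial (Fin n) ℝ) := Ideal.span
    (Set.range fun e : ι → Fin n => (Matrix.of fun i j => sgrad (p j) q (e i)).det)
  have hfin : I.minimalPrimes.Finite := Ideal.finite_minimalPrimes_of_isNoetherianRing _ I
  have hP : ∀ P ∈ I.minimalPrimes, ∃ R : MvPolynomial ι ℝ, R ≠ 0 ∧ ∀ x : Fin n → ℝ,
      eval x q ≠ 0 → (∀ a ∈ P, eval x a = 0) →
      eval (fun i => eval x (p i) / eval x q) R = 0 := by
    intro P hP
    have : P.IsPrime := hP.1.1
    by_cases hq : q ∈ P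
    · exact ⟨1, one_ne_zero, fun x hx h => absurd (h q hq) hx⟩
    · exact sard_prime p q P hq fun e => hP.1.2 (Ideal.subset_span ⟨e, rfl⟩)
  choose! R hR0 hR using hP
  refine ⟨∏ P ∈ hfin.toFinset, R P, Finset.prod_ne_zero_iff.2 fun P h =>
    hR0 P (hfin.mem_toFinset.1 h), ?_⟩
  rintro x hx ⟨c, hc, hcs⟩
  have hker : (RingHom.ker (eval x)).IsPrime := RingHom.ker_isPrime _
  have hI : I ≤ RingHom.ker (eval x) := by
    rw [Ideal.span_le]
    rintro _ ⟨e, rfl⟩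
    show eval x _ = 0
    rw [RingHom.map_det]
    rw [← Matrix.exists_mulVec_eq_zero_iff]
    refine ⟨c, hc, ?_⟩
    ext i
    have := hcs (e i)
    simp only [Matrix.mulVec, dotProduct]
    simpa [mul_comm] using this
  obtain ⟨P, hPm, hPle⟩ := Ideal.exists_minimalPrimes_le hI
  rw [map_prod]
  exact Finset.prod_eq_zero (hfin.mem_toFinset.2 hPm) (hR P hPm x hx fun a ha => hPle ha)

theorem hasStrictFDerivAt_eval {n : ℕ} (p : MvPolynomial (Fin n) ℝ) (x : Fin n → ℝ) :
    HasStrictFDerivAt (fun z : Fin n → ℝ => eval z p)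
      (∑ j, eval x (pderiv j p) • (ContinuousLinearMap.proj j : (Fin n → ℝ) →L[ℝ] ℝ)) x := by
  induction p using MvPolynomial.induction_on with
  | C a => simpa using hasStrictFDerivAt_const a x
  | add a b ha hb =>
    simp only [map_add]
    refine (ha.add hb).congr_fderiv ?_
    simp [add_smul, Finset.sum_add_distrib]
  | mul_X a i h =>
    simp only [map_mul, eval_X]
    have hi : HasStrictFDerivAt (fun z : Fin n → ℝ => z i)
      (ContinuousLinearMap.proj i : (Fin n → ℝ) →L[ℝ] ℝ) x := hasStrictFDerivAt_apply i x
    refine (h.mul hi).congr_fderiv ?_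
    ext v
    simp only [_root_.add_apply, _root_.smul_apply,
      _root_.sum_apply, ContinuousLinearMap.proj_apply, smul_eq_mul,
      Derivation.leibniz, pderiv_X, map_add, add_mul, Finset.sum_add_distrib, map_mul, eval_X,
      Finset.mul_sum, Pi.single_apply]
    congr 1
    · rw [Finset.sum_eq_single i (by intro b _ hb; simp [hb.symm]) (by simp)]
      simp
    · exact Finset.sum_congr rfl fun _ _ => by ring

theorem hasStrictFDerivAt_quot {n : ℕ} (p q : MvPolynomial (Fin n) ℝ) (x : Fin n → ℝ)
    (hq : eval x q ≠ 0) :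
    ∃ L : (Fin n → ℝ) →L[ℝ] ℝ,
    HasStrictFDerivAt (fun z : Fin n → ℝ => eval z p / eval z q) L x ∧
      ∀ j, eval x (sgrad p q j) = (eval x q) ^ 2 * L (Pi.single j 1) := by
  have h1 := (hasStrictDerivAt_inv hq).comp_hasStrictFDerivAt x (hasStrictFDerivAt_eval q x)
  have h2 := (hasStrictFDerivAt_eval p x).mul h1
  simp only [div_eq_mul_inv]
  refine ⟨_, h2, fun j => ?_⟩
  simp [sgrad, Pi.single_apply]
  field_simp
  ring

theorem relation_subset {n : ℕ} (p : Fin 4 → MvPolynomial (Fin n) ℝ) (q : MvPolynomial (Fin n) ℝ)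
    (T : Finset (Fin 4)) (hT : 3 ∉ T) :
    ∃ R : MvPolynomial (Fin 4) ℝ, R ≠ 0 ∧ ∀ (w : Fin 4 → ℝ) (x : Fin n → ℝ), eval x q ≠ 0 →
      eval x (p 3) / eval x q = w 3 → (∀ i ∈ T, eval x (p i) / eval x q = w i) →
      IsLocalMaxOn (fun z => eval z (p 3) / eval z q)
        {z | ∀ i : T, eval z (p i) / eval z q = eval x (p i) / eval x q} x →
      eval w R = 0 := by
  let j : Option T → Fin 4 := fun o => Option.elim o 3 Subtype.val
  have hj : Function.Injective j := by
    rintro (_ | a) (_ | b) h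
    · rfl
    · exact absurd (show (3 : Fin 4) = b from h) fun h => hT (h ▸ b.2)
    · exact absurd (show (a : Fin 4) = 3 from h) fun h => hT (h ▸ a.2)
    · exact congrArg some (Subtype.ext h)
  obtain ⟨R, hR, H⟩ := sard (fun o => p (j o)) q
  refine ⟨rename j R, fun h => hR ?_, ?_⟩
  · exact (rename_injective j hj) (by rw [h, map_zero])
  intro w x hq h3 hTw hmax
  rw [eval_rename]
  have hw : w ∘ j = fun o => eval x (p (j o)) / eval x q := by
    funext o
    rcases o with _ | a
    · exact h3.symm
    · exact (hTw a a.2).symm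
  rw [hw]
  apply H x hq
  choose L hL hL' using fun i => hasStrictFDerivAt_quot (p i) q x hq
  obtain ⟨Λ, Λ₀, hne, hsum⟩ := IsLocalExtrOn.exists_multipliers_of_hasStrictFDerivAt
    (f := fun (i : T) z => eval z (p i) / eval z q) (Or.inr hmax) (fun i : T => hL i) (hL 3)
  refine ⟨fun o => Option.elim o Λ₀ Λ, fun h => hne ?_, fun k => ?_⟩
  · have h1 : Λ₀ = 0 := congrFun h none
    have h2 : Λ = 0 := funext fun i => congrFun h (some i)
    simp [h1, h2]
  · have h1 := congrArg (fun l : (Fin n → ℝ) →L[ℝ] ℝ => eval x q ^ 2 * l (Pi.single k 1)) hsum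
    simp only [_root_.add_apply, _root_.smul_apply,
      _root_.sum_apply, smul_eq_mul, _root_.zero_apply, mul_zero] at h1
    rw [Fintype.sum_option]
    simp only [j, Option.elim, hL']
    rw [← h1, mul_add, Finset.mul_sum, add_comm]
    congr 1
    · exact Finset.sum_congr rfl fun _ _ => by ring
    · ring

theorem relation {n : ℕ} (p : Fin 4 → MvPolynomial (Fin n) ℝ) (q : MvPolynomial (Fin n) ℝ) :
    ∃ R : MvPolynomial (Fin 4) ℝ, R ≠ 0 ∧ ∀ (w : Fin 4 → ℝ) (x : Fin n → ℝ), eval x q ≠ 0 →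
      eval x (p 3) / eval x q = w 3 → 
      IsLocalMaxOn (fun z => eval z (p 3) / eval z q)
        {z | ∀ i : Fin 4, i ≠ 3 → eval x (p i) / eval x q = w i → eval z (p i) / eval z q = w i} x →
      eval w R = 0 := by
  classical
  have h := fun T : Finset (Fin 4) => fun hT => relation_subset p q T hT
  choose! R hR H using h
  refine ⟨∏ T with 3 ∉ T, R T, Finset.prod_ne_zero_iff.2 fun T hT => hR T (Finset.mem_filter.1 hT).2,
    fun w x hq h3 hmax => ?_⟩
  let T : Finset (Fin 4) := {i | i ≠ 3 ∧ eval x (p i) / eval x q = w i}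
  have hT : 3 ∉ T := by simp [T]
  rw [map_prod]
  refine Finset.prod_eq_zero (i := T) (by simp [hT]) (H T hT w x hq h3 ?_ ?_)
  · intro i hi
    simp only [T, Finset.mem_filter] at hi
    exact hi.2.2
  · refine hmax.on_subset fun z hz i hi hi2 => ?_
    have := hz ⟨i, by simp [T, hi, hi2]⟩
    rw [this, hi2]

/-- squared Euclidean norm -/
def rho {n : ℕ} (x : Fin n → ℝ) : ℝ := ∑ i, x i ^ 2

/-- the constraint set -/
def cset {n : ℕ} (q : MvPolynomial (Fin n) ℝ) (g : (Fin n → ℝ) → ℝ) (e t r : ℝ) :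
    Set (Fin n → ℝ) := {z | e ≤ eval z q ^ 2 ∧ g z ^ 2 ≤ t ∧ rho z ≤ r}

theorem max_relation {n : ℕ} (p₁ p₂ q : MvPolynomial (Fin n) ℝ) (f g : (Fin n → ℝ) → ℝ)
    (hf : ∀ x, eval x q * f x = eval x p₁) (hg : ∀ x, eval x q * g x = eval x p₂) :
    ∃ R : MvPolynomial (Fin 4) ℝ, R ≠ 0 ∧ ∀ (e t r : ℝ) (x : Fin n → ℝ), 0 < e →
      x ∈ cset q g e t r → (∀ z ∈ cset q g e t r, f z ^ 2 ≤ f x ^ 2) →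
      eval ![e, t, r, f x ^ 2] R = 0 := by
  let ρ : MvPolynomial (Fin n) ℝ := ∑ i, X i ^ 2
  let P : Fin 4 → MvPolynomial (Fin n) ℝ := ![q ^ 4, p₂ ^ 2, ρ * q ^ 2, p₁ ^ 2]
  obtain ⟨R, hR, H⟩ := relation P (q ^ 2)
  refine ⟨R, hR, fun e t r x he hx hmax => ?_⟩
  have F0 : ∀ z, eval z q ≠ 0 → eval z (P 0) / eval z (q ^ 2) = eval z q ^ 2 := by
    intro z hz; simp [P]; field_simp
  have F1 : ∀ z, eval z q ≠ 0 → eval z (P 1) / eval z (q ^ 2) = g z ^ 2 := by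
    intro z hz; simp [P, ← hg]; field_simp
  have F2 : ∀ z, eval z q ≠ 0 → eval z (P 2) / eval z (q ^ 2) = rho z := by
    intro z hz; simp [P, ρ, rho]; field_simp
  have F3 : ∀ z, eval z q ≠ 0 → eval z (P 3) / eval z (q ^ 2) = f z ^ 2 := by
    intro z hz; simp [P, ← hf]; field_simp
  have hne : ∀ z ∈ cset q g e t r, eval z q ≠ 0 := by
    intro z hz h0
    have := hz.1
    rw [h0] at this
    norm_num at this
    linarith
  have hq : eval x q ≠ 0 := hne x hx
  have hcont : ∀ i, ContinuousAt (fun z => eval z (P i) / eval z (q ^ 2)) x := fun i => by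
    obtain ⟨L, hL, -⟩ := hasStrictFDerivAt_quot (P i) (q ^ 2) x (by simpa using hq)
    exact hL.hasFDerivAt.continuousAt
  have hqn : ∀ᶠ z in nhds x, eval z q ≠ 0 :=
    (MvPolynomial.continuous_eval q).continuousAt.eventually_ne hq
  refine H _ x (by simpa using hq) (F3 x hq) ?_
  have hmem : ∀ᶠ z in nhdsWithin x {z | ∀ i : Fin 4, i ≠ 3 →
      eval x (P i) / eval x (q ^ 2) = ![e, t, r, f x ^ 2] i →
      eval z (P i) / eval z (q ^ 2) = ![e, t, r, f x ^ 2] i}, z ∈ cset q g e t r := by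
    have a0 : ∀ᶠ z in nhds x, eval x q ^ 2 = e ∨ e < eval z (P 0) / eval z (q ^ 2) := by
      rcases hx.1.eq_or_lt with h | h
      · exact Filter.Eventually.of_forall fun z => Or.inl h.symm
      · rw [← F0 x hq] at h
        exact ((hcont 0).eventually_const_lt h).mono fun z hz => Or.inr hz
    have a1 : ∀ᶠ z in nhds x, g x ^ 2 = t ∨ eval z (P 1) / eval z (q ^ 2) < t := by
      rcases hx.2.1.eq_or_lt with h | h
      · exact Filter.Eventually.of_forall fun z => Or.inl h
      · rw [← F1 x hq] at h
        exact ((hcont 1).eventually_lt_const h).mono fun z hz => Or.inr hz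
    have a2 : ∀ᶠ z in nhds x, rho x = r ∨ eval z (P 2) / eval z (q ^ 2) < r := by
      rcases hx.2.2.eq_or_lt with h | h
      · exact Filter.Eventually.of_forall fun z => Or.inl h
      · rw [← F2 x hq] at h
        exact ((hcont 2).eventually_lt_const h).mono fun z hz => Or.inr hz
    filter_upwards [self_mem_nhdsWithin, mem_nhdsWithin_of_mem_nhds hqn,
      mem_nhdsWithin_of_mem_nhds a0, mem_nhdsWithin_of_mem_nhds a1,
      mem_nhdsWithin_of_mem_nhds a2] with z hz hzq b0 b1 b2
    have c0 := hz 0 (by decide)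
    have c1 := hz 1 (by decide)
    have c2 := hz 2 (by decide)
    rw [F0 z hzq, F0 x hq] at c0
    rw [F1 z hzq, F1 x hq] at c1
    rw [F2 z hzq, F2 x hq] at c2
    rw [F0 z hzq] at b0
    rw [F1 z hzq] at b1
    rw [F2 z hzq] at b2
    simp at c0 c1 c2
    refine ⟨?_, ?_, ?_⟩
    · rcases b0 with h | h
      · exact (c0 h).ge
      · exact h.le
    · rcases b1 with h | h
      · exact (c1 h).le
      · exact h.le
    · rcases b2 with h | h
      · exact (c2 h).le
      · exact h.le
  filter_upwards [hmem] with z hz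
  rw [F3 z (hne z hz), F3 x hq]
  exact hmax z hz

/-- elimination of a variable -/
theorem eliminate {m : ℕ} (R : MvPolynomial (Fin (m + 1)) ℝ) (hR : R ≠ 0) :
    ∃ (R₀ : MvPolynomial (Fin m) ℝ) (W : MvPolynomial (Fin (m + 1)) ℝ), R₀ ≠ 0 ∧
      ∀ (e : ℝ) (y : Fin m → ℝ), e ≠ 0 → eval (Fin.cons e y : Fin (m + 1) → ℝ) R = 0 →
        eval y R₀ = e * eval (Fin.cons e y : Fin (m + 1) → ℝ) W := by
  let P := finSuccEquiv ℝ m R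
  have hP : P ≠ 0 := by simpa [P] using hR
  obtain ⟨P', hP', hnd⟩ := Polynomial.exists_eq_pow_rootMultiplicity_mul_and_not_dvd P hP 0
  rw [Polynomial.C_0, sub_zero] at hP' hnd
  rw [Polynomial.X_dvd_iff] at hnd
  refine ⟨P'.coeff 0, (finSuccEquiv ℝ m).symm (-P'.divX), hnd, fun e y he h => ?_⟩
  have h1 : ∀ S : MvPolynomial (Fin (m + 1)) ℝ, eval (Fin.cons e y : Fin (m + 1) → ℝ) S
      = Polynomial.eval e (Polynomial.map (eval y) (finSuccEquiv ℝ m S)) := fun S =>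
    eval_eq_eval_mv_eval' y e S
  rw [h1] at h ⊢
  change Polynomial.eval e (Polynomial.map (eval y) P) = 0 at h
  rw [hP', Polynomial.map_mul, Polynomial.map_pow, Polynomial.map_X, Polynomial.eval_mul,
    Polynomial.eval_pow, Polynomial.eval_X] at h
  have h2 := (mul_eq_zero.1 h).resolve_left (pow_ne_zero _ he)
  rw [AlgEquiv.apply_symm_apply]
  rw [← Polynomial.divX_mul_X_add P'] at h2
  simp at h2 ⊢
  linarith

theorem dense_ne_zero {n : ℕ} (q : MvPolynomial (Fin n) ℝ) (hq : q ≠ 0) :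
    Dense {x : Fin n → ℝ | eval x q ≠ 0} := by
  intro a
  rw [mem_closure_iff_nhds]
  intro U hU
  by_contra hne
  rw [Set.not_nonempty_iff_eq_empty] at hne
  obtain ⟨ε, hε, hball⟩ := Metric.mem_nhds_iff.1 hU
  apply hq
  refine MvPolynomial.funext_set (fun i => Metric.ball (a i) ε) (fun i => ?_) fun x hx => ?_
  · rw [Real.ball_eq_Ioo]
    exact Set.Ioo_infinite (by linarith)
  · rw [map_zero]
    by_contra h0
    have : x ∈ Metric.ball a ε := by
      rw [ball_pi a hε]
      exact hx
    have hm : x ∈ U ∩ {x : Fin n → ℝ | eval x q ≠ 0} := ⟨hball this, h0⟩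
    rw [hne] at hm
    exact hm

theorem continuous_rho {n : ℕ} : Continuous (rho : (Fin n → ℝ) → ℝ) := by
  unfold rho; fun_prop

theorem isBounded_rho {n : ℕ} (r : ℝ) : Bornology.IsBounded {x : Fin n → ℝ | rho x ≤ r} := by
  refine (Metric.isBounded_closedBall (x := (0 : Fin n → ℝ)) (r := |r| + 1)).subset fun x hx => ?_
  rw [mem_closedBall_zero_iff, pi_norm_le_iff_of_nonneg (by positivity)]
  intro i
  have h1 : x i ^ 2 ≤ rho x := Finset.single_le_sum (f := fun i => x i ^ 2)
    (fun i _ => sq_nonneg _) (Finset.mem_univ i)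
  have h2 : x i ^ 2 ≤ r := h1.trans hx
  rw [Real.norm_eq_abs]
  have h3 := le_abs_self r
  have h4 := sq_abs (x i)
  nlinarith [abs_nonneg (x i), abs_nonneg r]

theorem isCompact_cset {n : ℕ} (q : MvPolynomial (Fin n) ℝ) (g : (Fin n → ℝ) → ℝ)
    (hg : Continuous g) (e t r : ℝ) : IsCompact (cset q g e t r) := by
  refine Metric.isCompact_of_isClosed_isBounded ?_ ((isBounded_rho r).subset fun x hx => hx.2.2)
  have hq := MvPolynomial.continuous_eval q
  exact (isClosed_le continuous_const (hq.pow 2)).inter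
    ((isClosed_le (hg.pow 2) continuous_const).inter (isClosed_le continuous_rho continuous_const))

theorem sup_relation {n : ℕ} (q : MvPolynomial (Fin n) ℝ) (f g : (Fin n → ℝ) → ℝ)
    (hfc : Continuous f) (hgc : Continuous g)
    (R₀ : MvPolynomial (Fin 3) ℝ) (W : MvPolynomial (Fin 4) ℝ)
    (H : ∀ (e t r : ℝ) (x : Fin n → ℝ), 0 < e →
      x ∈ cset q g e t r → (∀ z ∈ cset q g e t r, f z ^ 2 ≤ f x ^ 2) →
      eval ![t, r, f x ^ 2] R₀ = e * eval ![e, t, r, f x ^ 2] W)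
    (t r L : ℝ)
    (hL : IsLUB (Set.image (fun z => f z ^ 2) {z | eval z q ≠ 0 ∧ g z ^ 2 ≤ t ∧ rho z ≤ r}) L) :
    eval ![t, r, L] R₀ = 0 := by
  have hclosed : IsClosed {y : ℝ × ℝ | eval ![t, r, y.2] R₀ = y.1 * eval ![y.1, t, r, y.2] W} := by
    refine isClosed_eq ?_ (continuous_fst.mul ?_)
    · refine (MvPolynomial.continuous_eval R₀).comp (continuous_pi fun i => ?_)
      fin_cases i <;> simp <;> fun_prop
    · refine (MvPolynomial.continuous_eval W).comp (continuous_pi fun i => ?_)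
      fin_cases i <;> simp <;> fun_prop
  have hmem : ((0 : ℝ), L) ∈ closure {y : ℝ × ℝ | eval ![t, r, y.2] R₀ = y.1 * eval ![y.1, t, r, y.2] W} := by
    rw [Metric.mem_closure_iff]
    intro δ hδ
    obtain ⟨_, ⟨z, hz, rfl⟩, hzL⟩ : ∃ y ∈ Set.image (fun z => f z ^ 2) {z | eval z q ≠ 0 ∧ g z ^ 2 ≤ t ∧ rho z ≤ r},
        L - δ < y := by
      obtain ⟨y, hy, h1, h2⟩ := hL.exists_between (sub_lt_self L hδ)
      exact ⟨y, hy, h1⟩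
    simp only at hzL
    have hzq : 0 < eval z q ^ 2 := by have := hz.1; positivity
    let e := min (eval z q ^ 2) (δ / 2)
    have he : 0 < e := lt_min hzq (by positivity)
    have hze : z ∈ cset q g e t r := ⟨min_le_left _ _, hz.2.1, hz.2.2⟩
    obtain ⟨x, hx, hxmax⟩ := (isCompact_cset q g hgc e t r).exists_isMaxOn ⟨z, hze⟩
      (hfc.pow 2).continuousOn
    have hx' : ∀ z ∈ cset q g e t r, f z ^ 2 ≤ f x ^ 2 := fun z hz => hxmax hz
    refine ⟨(e, f x ^ 2), H e t r x he hx hx', ?_⟩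
    have hxq : eval x q ≠ 0 := by
      intro h0
      have := hx.1
      rw [h0] at this
      norm_num at this
      linarith
    have h1 : f x ^ 2 ≤ L := hL.1 ⟨x, ⟨hxq, hx.2.1, hx.2.2⟩, rfl⟩
    have h2 := hx' z hze
    rw [Prod.dist_eq, max_lt_iff, Real.dist_eq, Real.dist_eq, abs_lt, abs_lt]
    have h3 : e ≤ δ / 2 := min_le_right _ _
    refine ⟨⟨?_, ?_⟩, ?_, ?_⟩ <;> linarith
  have := hclosed.closure_subset hmem
  simpa using this

theorem small_of_small {n : ℕ} (f g : (Fin n → ℝ) → ℝ)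
    (hfc : Continuous f) (hgc : Continuous g) (hZ : ∀ x, g x = 0 → f x = 0) (r η : ℝ)
    (hη : 0 < η) : ∃ τ > 0, ∀ x, rho x ≤ r → g x ^ 2 ≤ τ → f x ^ 2 ≤ η := by
  have hK : IsCompact {x | rho x ≤ r ∧ η ≤ f x ^ 2} := by
    refine Metric.isCompact_of_isClosed_isBounded ?_ ((isBounded_rho r).subset fun x hx => hx.1)
    exact (isClosed_le continuous_rho continuous_const).inter
      (isClosed_le continuous_const (hfc.pow 2))
  rcases Set.eq_empty_or_nonempty {x | rho x ≤ r ∧ η ≤ f x ^ 2} with h | h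
  · refine ⟨1, one_pos, fun x hx _ => ?_⟩
    by_contra hlt
    have : x ∈ {x | rho x ≤ r ∧ η ≤ f x ^ 2} := ⟨hx, (not_le.1 hlt).le⟩
    rw [h] at this
    exact this
  · obtain ⟨y, hy, hmin⟩ := hK.exists_isMinOn h (hgc.pow 2).continuousOn
    have hgy : g y ≠ 0 := by
      intro h0
      have := hy.2
      rw [hZ y h0] at this
      norm_num at this
      linarith
    refine ⟨g y ^ 2 / 2, by positivity, fun x hx hgx => ?_⟩
    by_contra hlt
    have h1 : g y ^ 2 ≤ g x ^ 2 := hmin (show x ∈ {x | rho x ≤ r ∧ η ≤ f x ^ 2} from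
      ⟨hx, (not_le.1 hlt).le⟩)
    have : 0 < g y ^ 2 := by positivity
    linarith

theorem final_poly (R : MvPolynomial (Fin 2) ℝ) (hR : R ≠ 0) :
    ∃ d : ℕ, ∀ b : ℝ, ∃ r > b, ∃ c > 0, ∃ η > 0, η ≤ 1 ∧
      ∀ s, 0 ≤ s → s ≤ η → c * s ^ (d + 1) ≤ |eval ![r, s] R| := by
  obtain ⟨y, hy⟩ : ∃ y, eval y R ≠ 0 := by
    by_contra h
    push Not at h
    exact hR (MvPolynomial.funext fun y => by simp [h y])
  refine ⟨R.totalDegree, fun b => ?_⟩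
  let A : Polynomial ℝ := aeval ![Polynomial.X, Polynomial.C (y 1)] R
  have hev : ∀ (v : Fin 2 → Polynomial ℝ) (a : ℝ), Polynomial.eval a (aeval v R)
      = eval (fun i => Polynomial.eval a (v i)) R := by
    intro v a
    have h1 : ((Polynomial.evalRingHom a).comp (aeval v : MvPolynomial (Fin 2) ℝ →ₐ[ℝ] _).toRingHom)
        = eval (fun i => Polynomial.eval a (v i)) := by
      apply MvPolynomial.ringHom_ext
      · intro c; simp
      · intro i; simp
    exact congrFun (congrArg DFunLike.coe h1) R
  have hA : A ≠ 0 := by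
    intro h0
    apply hy
    have := hev ![Polynomial.X, Polynomial.C (y 1)] (y 0)
    change Polynomial.eval (y 0) A = _ at this
    rw [h0, Polynomial.eval_zero] at this
    rw [this]
    congr 2
    funext i
    fin_cases i <;> simp
  obtain ⟨r, hr, hrA⟩ : ∃ r ∈ Set.Ioi b, r ∉ {x | A.IsRoot x} :=
    (Set.Ioi_infinite b).exists_notMem_finite (Polynomial.finite_setOfPred_isRoot hA)
  let u : Polynomial ℝ := aeval ![Polynomial.C r, Polynomial.X] R
  have hu_eval : ∀ s, Polynomial.eval s u = eval ![r, s] R := by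
    intro s
    rw [hev]
    congr 2
    funext i
    fin_cases i <;> simp
  have hu : u ≠ 0 := by
    intro h0
    apply hrA
    show Polynomial.eval r A = 0
    have h1 := hu_eval (y 1)
    rw [h0, Polynomial.eval_zero] at h1
    rw [hev, h1]
    congr 2
    funext i
    fin_cases i <;> simp
  have hdeg : u.natDegree ≤ R.totalDegree := by
    have := MvPolynomial.aeval_natDegree_le (m := R.totalDegree) (n := 1) R le_rfl
      ![Polynomial.C r, Polynomial.X] (fun i => by fin_cases i <;> simp)
    simpa using this
  obtain ⟨v, hv, hvd⟩ := Polynomial.exists_eq_pow_rootMultiplicity_mul_and_not_dvd u hu 0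
  rw [Polynomial.C_0, sub_zero] at hv hvd
  rw [Polynomial.X_dvd_iff, Polynomial.coeff_zero_eq_eval_zero] at hvd
  set m := u.rootMultiplicity 0 with hm
  have hmd : m ≤ u.natDegree := by
    have := Polynomial.natDegree_mul (p := Polynomial.X ^ m) (q := v) (by simp)
      (by rintro rfl; simp at hvd)
    rw [← hv] at this
    simp at this
    omega
  have hev2 : ∀ᶠ s in nhds (0 : ℝ), |Polynomial.eval 0 v| / 2 < |Polynomial.eval s v| := by
    refine (v.continuous.abs.continuousAt (x := 0)).eventually_const_lt ?_
    exact half_lt_self (abs_pos.2 hvd)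
  obtain ⟨η, hη, hball⟩ := Metric.eventually_nhds_iff.1 hev2
  refine ⟨r, hr, |Polynomial.eval 0 v| / 2, by positivity, min (η / 2) 1, by positivity,
    min_le_right _ _, fun s hs0 hs => ?_⟩
  have h1 : s ≤ η / 2 := hs.trans (min_le_left _ _)
  have h2 : s ≤ 1 := hs.trans (min_le_right _ _)
  have h3 := hball (y := s) (by rw [Real.dist_eq, sub_zero, abs_of_nonneg hs0]; linarith)
  rw [← hu_eval, hv]
  simp only [Polynomial.eval_mul, Polynomial.eval_pow, Polynomial.eval_X, abs_mul, abs_pow,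
    abs_of_nonneg hs0]
  have h4 : s ^ (R.totalDegree + 1) ≤ s ^ m := pow_le_pow_of_le_one hs0 h2 (by omega)
  have h5 : 0 ≤ s ^ m := by positivity
  have h6 : 0 ≤ |Polynomial.eval 0 v| / 2 := by positivity
  calc |Polynomial.eval 0 v| / 2 * s ^ (R.totalDegree + 1) ≤ |Polynomial.eval 0 v| / 2 * s ^ m := by gcongr
    _ ≤ |Polynomial.eval s v| * s ^ m := by gcongr
    _ = _ := mul_comm _ _

theorem loj {n : ℕ} (p₁ p₂ q : MvPolynomial (Fin n) ℝ) (hq : q ≠ 0) (f g : (Fin n → ℝ) → ℝ)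
    (hf : ∀ x, eval x q * f x = eval x p₁) (hg : ∀ x, eval x q * g x = eval x p₂)
    (hfc : Continuous f) (hgc : Continuous g) (hZ : ∀ x, g x = 0 → f x = 0) :
    ∃ M : ℕ, ∀ a, g a = 0 → ∃ C : ℝ, ∀ᶠ x in nhds a, |f x| ^ M ≤ C * |g x| := by
  obtain ⟨R, hR, H⟩ := max_relation p₁ p₂ q f g hf hg
  obtain ⟨R₀, W, hR₀, H₀⟩ := eliminate R hR
  obtain ⟨R₁, W₁, hR₁, H₁⟩ := eliminate R₀ hR₀
  obtain ⟨d, hd⟩ := final_poly R₁ hR₁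
  refine ⟨2 * (d + 1), fun a ha => ?_⟩
  obtain ⟨r, hr, c, hc, η, hη, hη1, hs⟩ := hd (rho a)
  have Hsup := sup_relation q f g hfc hgc R₀ W (fun e t r x he hx hmax =>
    H₀ e _ he.ne' (H e t r x he hx hmax))
  obtain ⟨τ, hτ, hsmall⟩ := small_of_small f g hfc hgc hZ r η hη
  obtain ⟨B, hB⟩ : ∃ B : ℝ, ∀ y ∈ Set.Icc (0 : ℝ) 1 ×ˢ Set.Icc (0 : ℝ) 1,
      ‖eval ![y.1, r, y.2] W₁‖ ≤ B := by
    refine (isCompact_Icc.prod isCompact_Icc).exists_bound_of_continuousOn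
      (f := fun y : ℝ × ℝ => eval ![y.1, r, y.2] W₁) (Continuous.continuousOn ?_)
    refine (MvPolynomial.continuous_eval W₁).comp (continuous_pi fun i => ?_)
    fin_cases i <;> simp <;> fun_prop
  have hB0 : 0 ≤ B := (norm_nonneg _).trans (hB (0, 0) (by simp))
  have key : ∀ x, eval x q ≠ 0 → rho x ≤ r → g x ^ 2 ≤ τ → g x ^ 2 ≤ 1 →
      (f x ^ 2) ^ (d + 1) ≤ B / c * g x ^ 2 := by
    intro x hxq hxr hxτ hx1
    by_cases hgx : g x = 0
    · simp [hgx, hZ x hgx]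
    set t := g x ^ 2 with ht
    have ht0 : 0 < t := by positivity
    let S := Set.image (fun z => f z ^ 2) {z | eval z q ≠ 0 ∧ g z ^ 2 ≤ t ∧ rho z ≤ r}
    have hSx : f x ^ 2 ∈ S := ⟨x, ⟨hxq, le_refl _, hxr⟩, rfl⟩
    have hSb : ∀ y ∈ S, y ≤ η := by
      rintro _ ⟨z, hz, rfl⟩
      exact hsmall z hz.2.2 (hz.2.1.trans hxτ)
    have hL : IsLUB S (sSup S) := isLUB_csSup ⟨_, hSx⟩ ⟨η, hSb⟩
    have h1 : f x ^ 2 ≤ sSup S := hL.1 hSx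
    have h2 : sSup S ≤ η := hL.2 hSb
    have h0 : 0 ≤ sSup S := (sq_nonneg _).trans h1
    have h3 := Hsup t r (sSup S) hL
    have h4 := H₁ t ![r, sSup S] ht0.ne' h3
    have h5 := hs _ h0 h2
    rw [h4, abs_mul, abs_of_pos ht0] at h5
    have h6 := hB (t, sSup S) ⟨⟨ht0.le, hx1⟩, h0, h2.trans hη1⟩
    rw [Real.norm_eq_abs] at h6
    change c * sSup S ^ (d + 1) ≤ t * |eval ![t, r, sSup S] W₁| at h5
    simp only at h6
    have h7 : c * sSup S ^ (d + 1) ≤ t * B := h5.trans (by gcongr)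
    calc (f x ^ 2) ^ (d + 1) ≤ sSup S ^ (d + 1) := by gcongr
      _ ≤ B / c * t := by
        rw [div_mul_eq_mul_div, le_div_iff₀ hc]
        linarith
  let O : Set (Fin n → ℝ) := {x | rho x < r ∧ g x ^ 2 < τ ∧ g x ^ 2 < 1}
  have hO : IsOpen O := (isOpen_lt continuous_rho continuous_const).inter
    ((isOpen_lt (hgc.pow 2) continuous_const).inter (isOpen_lt (hgc.pow 2) continuous_const))
  have haO : a ∈ O := ⟨hr, by simpa [ha] using hτ, by simp [ha]⟩
  have hOcl := (dense_ne_zero q hq).open_subset_closure_inter hO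
  have hcl : IsClosed {x | (f x ^ 2) ^ (d + 1) ≤ B / c * g x ^ 2} :=
    isClosed_le ((hfc.pow 2).pow _) (continuous_const.mul (hgc.pow 2))
  refine ⟨B / c, ?_⟩
  filter_upwards [hO.mem_nhds haO] with x hx
  have h1 : (f x ^ 2) ^ (d + 1) ≤ B / c * g x ^ 2 := by
    have : closure (O ∩ {x | eval x q ≠ 0}) ⊆ {x | (f x ^ 2) ^ (d + 1) ≤ B / c * g x ^ 2} :=
      hcl.closure_subset_iff.2 fun z hz => key z hz.2 hz.1.1.le hz.1.2.1.le hz.1.2.2.le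
    exact this (hOcl hx)
  have h2 : |g x| ≤ 1 := by
    have := hx.2.2
    rw [← sq_abs] at this
    nlinarith [abs_nonneg (g x)]
  have h3 : g x ^ 2 ≤ |g x| := by
    rw [← sq_abs]
    nlinarith [abs_nonneg (g x)]
  calc |f x| ^ (2 * (d + 1)) = (f x ^ 2) ^ (d + 1) := by rw [pow_mul, sq_abs]
    _ ≤ _ := h1
    _ ≤ _ := by gcongr

theorem quot_bound {E : Type} [TopologicalSpace E] (f g : E → ℝ)
    (M : ℕ) (a : E) (C : ℝ) (hC : ∀ᶠ x in nhds a, |f x| ^ M ≤ C * |g x|)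
    (hfa : ∀ᶠ x in nhds a, g x = 0 → f x = 0)
    (j N s : ℕ) (hN : N = M * j + s) (hs : 0 < s) :
    ∀ᶠ x in nhds a, |f x ^ N / g x ^ j| ≤ |C| ^ j * |f x| ^ s := by
  filter_upwards [hC, hfa] with x hx h0
  by_cases hg : g x = 0
  · have hf : f x = 0 := h0 hg
    have : f x ^ N = 0 := by rw [hf, zero_pow]; omega
    rw [this, zero_div, abs_zero]
    positivity
  · have hgp : 0 < |g x| ^ j := by positivity
    rw [abs_div, abs_pow, abs_pow, div_le_iff₀ hgp, hN, pow_add, pow_mul]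
    have h1 : |f x| ^ M ≤ |C| * |g x| := hx.trans (by gcongr; exact le_abs_self C)
    calc (|f x| ^ M) ^ j * |f x| ^ s ≤ (|C| * |g x|) ^ j * |f x| ^ s := by gcongr
      _ = _ := by rw [mul_pow]; ring

theorem flat {E : Type} [NormedAddCommGroup E] [NormedSpace ℝ E] (f g : E → ℝ)
    (hZ : ∀ x, g x = 0 → f x = 0) (M : ℕ)
    (hM : ∀ a, g a = 0 → ∃ C : ℝ, ∀ᶠ x in nhds a, |f x| ^ M ≤ C * |g x|) (k : ℕ) :
    ∀ (G : Type) [NormedAddCommGroup G] [NormedSpace ℝ G] (b : E → G) (j N : ℕ),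
      ContDiff ℝ k f → ContDiff ℝ k g → ContDiff ℝ k b → M * (j + k) + k + 1 ≤ N →
      ContDiff ℝ k (fun x => (f x ^ N / g x ^ j) • b x) := by
  induction k with
  | zero =>
    intro G _ _ b j N hf hg hb hN
    rw [Nat.cast_zero, contDiff_zero] at *
    rw [continuous_iff_continuousAt]
    intro a
    by_cases hga : g a = 0
    · refine ContinuousAt.smul ?_ hb.continuousAt
      obtain ⟨C, hC⟩ := hM a hga
      have h1 := quot_bound f g M a C hC (Filter.Eventually.of_forall hZ) j N (N - M * j)
        (by have : M * (j + 0) = M * j := rfl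
            omega) (by have : M * (j + 0) = M * j := rfl
                       omega)
      have hs : N - M * j ≠ 0 := by
        have : M * (j + 0) = M * j := rfl
        omega
      have hN0 : N ≠ 0 := by omega
      change Filter.Tendsto _ _ (nhds (f a ^ N / g a ^ j))
      rw [hZ a hga, zero_pow hN0, zero_div]
      refine squeeze_zero_norm' h1 ?_
      have : Filter.Tendsto (fun x => |C| ^ j * |f x| ^ (N - M * j)) (nhds a)
          (nhds (|C| ^ j * |f a| ^ (N - M * j))) :=
        (continuous_const.mul (hf.abs.pow _)).continuousAt
      rwa [hZ a hga, abs_zero, zero_pow hs, mul_zero] at this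
    · exact ((hf.continuousAt.pow _).div (hg.continuousAt.pow _) (pow_ne_zero _ hga)).smul
        hb.continuousAt
  | succ k ih =>
    intro G _ _ b j N hf hg hb hN
    have hk1 : (1 : WithTop ℕ∞) ≤ ((k + 1 : ℕ) : WithTop ℕ∞) := by exact_mod_cast Nat.le_add_left 1 k
    have hk1' : ((k + 1 : ℕ) : WithTop ℕ∞) ≠ 0 := by exact_mod_cast Nat.succ_ne_zero k
    have hkk : ((k : ℕ) : WithTop ℕ∞) ≤ ((k + 1 : ℕ) : WithTop ℕ∞) := by exact_mod_cast Nat.le_succ k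
    have hfd : Differentiable ℝ f := hf.differentiable hk1'
    have hgd : Differentiable ℝ g := hg.differentiable hk1'
    have hbd : Differentiable ℝ b := hb.differentiable hk1'
    have hf' : ContDiff ℝ k (fderiv ℝ f) := hf.fderiv_right (by norm_cast)
    have hg' : ContDiff ℝ k (fderiv ℝ g) := hg.fderiv_right (by norm_cast)
    have hb' : ContDiff ℝ k (fderiv ℝ b) := hb.fderiv_right (by norm_cast)
    have hfk := hf.of_le hkk
    have hgk := hg.of_le hkk
    have hbk := hb.of_le hkk
    let T : E → (E →L[ℝ] G) := fun x =>
      (N * g x) • (fderiv ℝ f x).smulRight (b x) + (f x * g x) • fderiv ℝ b x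
        - (j * f x) • (fderiv ℝ g x).smulRight (b x)
    have hT : ContDiff ℝ k T := by
      refine ((ContDiff.smul (contDiff_const.mul hgk) (hf'.smulRight hbk)).add
        (ContDiff.smul (hfk.mul hgk) hb')).sub
        (ContDiff.smul (contDiff_const.mul hfk) (hg'.smulRight hbk))
    have e1 : M * (j + (k + 1)) = M * j + M * k + M := by ring
    have e2 : M * (j + 1 + k) = M * j + M * k + M := by ring
    have hcd := ih (E →L[ℝ] G) T (j + 1) (N - 1) hfk hgk hT (by omega)
    have hder : ∀ x, HasFDerivAt (fun x => (f x ^ N / g x ^ j) • b x)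
        ((f x ^ (N - 1) / g x ^ (j + 1)) • T x) x := by
      intro a
      by_cases hga : g a = 0
      · have hfa := hZ a hga
        obtain ⟨C, hC⟩ := hM a hga
        have h1 := quot_bound f g M a C hC (Filter.Eventually.of_forall hZ) j N (N - M * j)
          (by omega) (by omega)
        have hz : (f a ^ (N - 1) / g a ^ (j + 1)) • T a = 0 := by simp [hga]
        rw [hz]
        have hs : 2 ≤ N - M * j := by omega
        rw [hasFDerivAt_iff_isLittleO_nhds_zero]
        have hN0 : N ≠ 0 := by omega
        have hlim : (fun x => (f x ^ N / g x ^ j) • b x) =o[nhds a] fun x => x - a := by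
          have o1 : (fun x => f x ^ N / g x ^ j) =O[nhds a] fun x => f x ^ (N - M * j) := by
            refine Asymptotics.IsBigO.of_bound (|C| ^ j) ?_
            refine h1.mono fun x hx => ?_
            rw [Real.norm_eq_abs, Real.norm_eq_abs, abs_pow (f x) (N - M * j)]
            exact hx
          have o2 : f =O[nhds a] fun x => x - a := by
            have := (hfd a).isBigO_sub
            simpa [hfa] using this
          have o2' : f =o[nhds a] fun _ => (1 : ℝ) := by
            rw [Asymptotics.isLittleO_one_iff]
            have := hfd.continuous.continuousAt (x := a)
            unfold ContinuousAt at this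
            rwa [hfa] at this
          have o3 : (fun x => f x ^ (N - M * j)) =o[nhds a] fun x => x - a := by
            obtain ⟨s, hs'⟩ : ∃ s, N - M * j = (s + 1) + 1 := ⟨N - M * j - 2, by omega⟩
            rw [hs']
            have o4 : (fun x => f x ^ (s + 1)) =o[nhds a] fun _ => (1 : ℝ) := by
              simpa using o2'.pow (n := s + 1) (by omega)
            have := o4.mul_isBigO o2.norm_right
            simp only [one_mul] at this
            simpa [pow_succ] using this.of_norm_right
          have o5 : b =O[nhds a] fun _ => (1 : ℝ) :=
            (hbd.continuous.continuousAt (x := a)).isBigO_one ℝ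
          have o6 := (o1.trans_isLittleO o3).norm_right.smul_isBigO o5
          simpa using o6.norm_right
        have := hlim.comp_tendsto (k := fun h : E => a + h) (l' := nhds 0) (by
          have : Filter.Tendsto (fun h : E => a + h) (nhds 0) (nhds (a + 0)) :=
            (continuous_const.add continuous_id).continuousAt
          simpa using this)
        simpa [Function.comp_def, hfa, hga, zero_pow hN0] using this
      · have d0 := (hasDerivAt_inv (pow_ne_zero j hga)).comp_hasFDerivAt a
          ((hgd a).hasFDerivAt.pow j)
        have d1 := ((hfd a).hasFDerivAt.pow N).mul d0
        have d2 := d1.smul (hbd a).hasFDerivAt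
        refine (d2.congr_fderiv ?_).congr_of_eventuallyEq (Filter.Eventually.of_forall fun x => ?_)
        · obtain ⟨N', rfl⟩ : ∃ N', N = N' + 1 := ⟨N - 1, by omega⟩
          ext v
          simp only [T]
          simp
          rcases j with _ | j
          · simp
            match_scalars <;> field_simp <;> ring
          · simp
            match_scalars
            · field_simp
              ring
            · field_simp
              ring
        · simp [div_eq_mul_inv]
    have hN2 : ((k + 1 : ℕ) : WithTop ℕ∞) = (k : WithTop ℕ∞) + 1 := by norm_cast
    rw [hN2, contDiff_succ_iff_hasFDerivAt (n := k)]
    exact ⟨_, hcd, hder⟩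

/-- **Regulous functions, Proposition `prfinradg`**: for `k`-regulous functions `f`, `g`
on `ℝⁿ`, `f` lies in the radical of the principal ideal `(g)` of `R^k(ℝⁿ)` if and only if
`Z(g) ⊆ Z(f)`. -/
theorem mem_radical_span_iff_zero_set_subset (n k : ℕ) (f g : regulousRing n k) :
    f ∈ (Ideal.span {g} : Ideal (regulousRing n k)).radical ↔
      {x : Fin n → ℝ | (g : (Fin n → ℝ) → ℝ) x = 0} ⊆
        {x : Fin n → ℝ | (f : (Fin n → ℝ) → ℝ) x = 0} := by
  constructor
  · rintro ⟨N, hN⟩ x hx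
    obtain ⟨h, hh⟩ := Ideal.mem_span_singleton.1 hN
    have h1 : (f : (Fin n → ℝ) → ℝ) x ^ N =
        (g : (Fin n → ℝ) → ℝ) x * (h : (Fin n → ℝ) → ℝ) x :=
      congrFun (congrArg Subtype.val hh) x
    rw [Set.mem_setOf_eq] at hx ⊢
    rw [hx, zero_mul] at h1
    exact eq_zero_of_pow_eq_zero h1
  · intro hZ
    obtain ⟨f, hf⟩ := f
    obtain ⟨g, hg⟩ := g
    have hZ' : ∀ x, g x = 0 → f x = 0 := fun x hx => hZ hx
    obtain ⟨hfk, pf, qf, hqf, hpf⟩ := id hf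
    obtain ⟨hgk, pg, qg, hqg, hpg⟩ := id hg
    by_cases hpg0 : pg = 0
    · have hg0 : g = 0 := by
        refine hgk.continuous.ext_on (dense_ne_zero qg hqg) continuous_const fun x hx => ?_
        have := hpg x
        rw [hpg0, map_zero] at this
        exact (mul_eq_zero.1 this).resolve_left hx
      have hf0 : (⟨f, hf⟩ : regulousRing n k) = 0 := by
        apply Subtype.ext
        funext x
        exact hZ' x (by rw [hg0]; rfl)
      rw [hf0]
      exact zero_mem _
    · obtain ⟨M, hM⟩ := loj (pf * qg) (pg * qf) (qf * qg) (mul_ne_zero hqf hqg) f g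
        (fun x => by simp only [map_mul]; rw [← hpf x]; ring)
        (fun x => by simp only [map_mul]; rw [← hpg x]; ring)
        hfk.continuous hgk.continuous hZ'
      have hh := flat f g hZ' M hM k ℝ (fun _ => (1 : ℝ)) 1 (M * (1 + k) + k + 1)
        hfk hgk contDiff_const le_rfl
      set N := M * (1 + k) + k + 1 with hNdef
      have hN0 : N ≠ 0 := by omega
      have hreg : IsRegulous n k (fun x => (f x ^ N / g x ^ 1) • (1 : ℝ)) := by
        refine ⟨hh, qg * pf ^ N, pg * qf ^ N, mul_ne_zero hpg0 (pow_ne_zero _ hqf), fun x => ?_⟩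
        simp only [map_mul, map_pow]
        rw [← hpf x, ← hpg x]
        by_cases hgx : g x = 0
        · simp [hgx, hZ' x hgx, hN0]
        · simp only [pow_one, smul_eq_mul, mul_one, mul_pow]
          field_simp
      refine ⟨N, Ideal.mem_span_singleton.2 ⟨⟨_, hreg⟩, ?_⟩⟩
      apply Subtype.ext
      funext x
      change f x ^ N = g x * ((f x ^ N / g x ^ 1) • (1 : ℝ))
      by_cases hgx : g x = 0
      · simp [hgx, hZ' x hgx, hN0]
      · simp only [pow_one, smul_eq_mul, mul_one]
        field_simp
end
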